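/- arXiv:1305.3546 — 4 statements merged into one kernel-verified Lean document; each statement's English description precedes it below -/
import Mathlib

section
/- Let X be a real normed vector space with von Neumann–Jordan constant at most ε + 1. Then for all x, y ∈ X, |[2x, y] − 2[x, y]| ≤ 2ε(‖x + y‖² + ‖x − y‖² + 2‖x‖²), and this quantity is in turn at most 4ε[(1 + ε)(‖x‖² + ‖y‖²) + ‖x‖²]. -/
/-!
`[2x, y] - 2[x, y]` is the difference of the defects in the parallelogram law for the pairs
`(x + y, x)` and `(x - y, x)`: in each pair the difference of the entries is `±y`, so the two
terms `‖y‖²` cancel. A von Neumann–Jordan constant at most `1 + ε` bounds the defect of `(a, b)` by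
`2ε(‖a‖² + ‖b‖²)`, because `1 - ε ≤ 1 / (1 + ε)`.
-/

section Seminormed

variable {X : Type*} [SeminormedAddCommGroup X]

/-- The bracket `[a, b]`; in a real inner product space it equals `4⟪a, b⟫`. -/
def normBracket (a b : X) : ℝ :=
  ‖a + b‖ ^ 2 - ‖a - b‖ ^ 2

/-- The signed error in the parallelogram law for the pair `(a, b)`. -/
def parallelogramDefect (a b : X) : ℝ :=
  ‖a + b‖ ^ 2 + ‖a - b‖ ^ 2 - 2 * (‖a‖ ^ 2 + ‖b‖ ^ 2)

theorem normBracket_two_nsmul_sub_two_mul (x y : X) :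
    normBracket (2 • x) y - 2 * normBracket x y =
      parallelogramDefect (x + y) x - parallelogramDefect (x - y) x := by
  have add_add : x + y + x = 2 • x + y := by abel
  have sub_add : x - y + x = 2 • x - y := by abel
  have norm_sub_sub : ‖x - y - x‖ = ‖y‖ := by rw [sub_sub_cancel_left, norm_neg]
  simp only [normBracket, parallelogramDefect, add_add, sub_add, norm_sub_sub,
    add_sub_cancel_left]
  ring

variable {ε : ℝ}

theorem abs_normBracket_two_nsmul_sub_two_mul_le
    (hdefect : ∀ a b : X, |parallelogramDefect a b| ≤ 2 * ε * (‖a‖ ^ 2 + ‖b‖ ^ 2)) (x y : X) :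
    |normBracket (2 • x) y - 2 * normBracket x y| ≤
      2 * ε * (‖x + y‖ ^ 2 + ‖x - y‖ ^ 2 + 2 * ‖x‖ ^ 2) :=
  calc |normBracket (2 • x) y - 2 * normBracket x y|
    _ = |parallelogramDefect (x + y) x - parallelogramDefect (x - y) x| := by
      rw [normBracket_two_nsmul_sub_two_mul]
    _ ≤ |parallelogramDefect (x + y) x| + |parallelogramDefect (x - y) x| := abs_sub _ _
    _ ≤ 2 * ε * (‖x + y‖ ^ 2 + ‖x‖ ^ 2) + 2 * ε * (‖x - y‖ ^ 2 + ‖x‖ ^ 2) :=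
      add_le_add (hdefect _ _) (hdefect _ _)
    _ = 2 * ε * (‖x + y‖ ^ 2 + ‖x - y‖ ^ 2 + 2 * ‖x‖ ^ 2) := by ring

theorem norm_add_sq_add_norm_sub_sq_le {x y : X}
    (hdefect : parallelogramDefect x y ≤ 2 * ε * (‖x‖ ^ 2 + ‖y‖ ^ 2)) :
    ‖x + y‖ ^ 2 + ‖x - y‖ ^ 2 ≤ 2 * ((1 + ε) * (‖x‖ ^ 2 + ‖y‖ ^ 2)) := by
  rw [parallelogramDefect] at hdefect
  linarith

theorem bracket_double_law_general (hε : 0 ≤ ε)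
    (hdefect : ∀ a b : X, |parallelogramDefect a b| ≤ 2 * ε * (‖a‖ ^ 2 + ‖b‖ ^ 2)) (x y : X) :
    |normBracket (2 • x) y - 2 * normBracket x y| ≤
        2 * ε * (‖x + y‖ ^ 2 + ‖x - y‖ ^ 2 + 2 * ‖x‖ ^ 2) ∧
      2 * ε * (‖x + y‖ ^ 2 + ‖x - y‖ ^ 2 + 2 * ‖x‖ ^ 2) ≤
        4 * ε * ((1 + ε) * (‖x‖ ^ 2 + ‖y‖ ^ 2) + ‖x‖ ^ 2) := by
  refine ⟨abs_normBracket_two_nsmul_sub_two_mul_le hdefect x y, ?_⟩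
  calc 2 * ε * (‖x + y‖ ^ 2 + ‖x - y‖ ^ 2 + 2 * ‖x‖ ^ 2)
    _ ≤ 2 * ε * (2 * ((1 + ε) * (‖x‖ ^ 2 + ‖y‖ ^ 2)) + 2 * ‖x‖ ^ 2) := by
      gcongr
      exact norm_add_sq_add_norm_sub_sq_le (le_of_abs_le (hdefect x y))
    _ = 4 * ε * ((1 + ε) * (‖x‖ ^ 2 + ‖y‖ ^ 2) + ‖x‖ ^ 2) := by ring

end Seminormed

theorem abs_sub_one_le_of_one_div_le_of_le {ε r : ℝ} (hε : 0 ≤ ε)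
    (hlower : 1 / (ε + 1) ≤ r) (hupper : r ≤ ε + 1) : |r - 1| ≤ ε := by
  have one_sub_le : 1 - ε ≤ 1 / (ε + 1) := by
    rw [le_div_iff₀ (by positivity)]
    nlinarith [sq_nonneg ε]
  exact abs_le.mpr ⟨by linarith, by linarith⟩

section Normed

/-- The von Neumann–Jordan constant of `X` is at most `M`. The pair `(0, 0)` is excluded
because its quotient would be `0 / 0 = 0`. -/
def VonNeumannJordanConstantLE (X : Type*) [NormedAddCommGroup X] (M : ℝ) : Prop :=
  ∀ a b : X, ¬(a = 0 ∧ b = 0) →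
    1 / M ≤ (‖a + b‖ ^ 2 + ‖a - b‖ ^ 2) / (2 * (‖a‖ ^ 2 + ‖b‖ ^ 2)) ∧
    (‖a + b‖ ^ 2 + ‖a - b‖ ^ 2) / (2 * (‖a‖ ^ 2 + ‖b‖ ^ 2)) ≤ M

variable {X : Type*} [NormedAddCommGroup X]

theorem norm_sq_add_norm_sq_pos {a b : X} (hab : ¬(a = 0 ∧ b = 0)) :
    0 < ‖a‖ ^ 2 + ‖b‖ ^ 2 := by
  rcases not_and_or.mp hab with ha | hb
  · have := norm_pos_iff.mpr ha
    positivity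
  · have := norm_pos_iff.mpr hb
    positivity

theorem VonNeumannJordanConstantLE.abs_parallelogramDefect_le {ε : ℝ} (hε : 0 ≤ ε)
    (hX : VonNeumannJordanConstantLE X (ε + 1)) (a b : X) :
    |parallelogramDefect a b| ≤ 2 * ε * (‖a‖ ^ 2 + ‖b‖ ^ 2) := by
  by_cases hab : a = 0 ∧ b = 0
  · obtain ⟨rfl, rfl⟩ := hab
    simp [parallelogramDefect]
  · have norms_pos : 0 < 2 * (‖a‖ ^ 2 + ‖b‖ ^ 2) :=
      mul_pos two_pos (norm_sq_add_norm_sq_pos hab)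
    obtain ⟨hlower, hupper⟩ := hX a b hab
    have ratio_near_one := abs_sub_one_le_of_one_div_le_of_le hε hlower hupper
    rw [div_sub_one norms_pos.ne', abs_div, abs_of_pos norms_pos, div_le_iff₀ norms_pos]
      at ratio_near_one
    rw [parallelogramDefect]
    linarith

end Normed

/-- **Approximate doubling law for the bracket** (Lemma 2.2). For a real normed vector
space with von Neumann–Jordan constant at most `ε + 1`, with `[a, b] = ‖a+b‖² − ‖a−b‖²`,
`|[2x, y] − 2[x, y]| ≤ 2ε(‖x+y‖² + ‖x−y‖² + 2‖x‖²) ≤ 4ε[(1+ε)(‖x‖² + ‖y‖²) + ‖x‖²]`. -/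
theorem bracket_double_law {X : Type*} [NormedAddCommGroup X] [NormedSpace ℝ X]
    (ε : ℝ) (hε : 0 ≤ ε)
    (hJ : ∀ a b : X, ¬(a = 0 ∧ b = 0) →
      1 / (ε + 1) ≤ (‖a + b‖ ^ 2 + ‖a - b‖ ^ 2) / (2 * (‖a‖ ^ 2 + ‖b‖ ^ 2)) ∧
      (‖a + b‖ ^ 2 + ‖a - b‖ ^ 2) / (2 * (‖a‖ ^ 2 + ‖b‖ ^ 2)) ≤ ε + 1) :
    ∀ x y : X,
      |(‖2 • x + y‖ ^ 2 - ‖2 • x - y‖ ^ 2) - 2 * (‖x + y‖ ^ 2 - ‖x - y‖ ^ 2)| ≤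
        2 * ε * (‖x + y‖ ^ 2 + ‖x - y‖ ^ 2 + 2 * ‖x‖ ^ 2) ∧
      2 * ε * (‖x + y‖ ^ 2 + ‖x - y‖ ^ 2 + 2 * ‖x‖ ^ 2) ≤
        4 * ε * ((1 + ε) * (‖x‖ ^ 2 + ‖y‖ ^ 2) + ‖x‖ ^ 2) :=
  have hX : VonNeumannJordanConstantLE X (ε + 1) := hJ
  bracket_double_law_general hε (hX.abs_parallelogramDefect_le hε)
end

section
/- Let X be a two-dimensional real normed vector space with von Neumann–Jordan constant at most ε + 1, where ε ≥ 0 satisfies 1 − 15ε − 13.5ε² > 0. Then there exists a linear isomorphism Λ from X onto the Euclidean space ℝ² with ‖Λ‖·‖Λ⁻¹‖ ≤ √((1 + 15ε + 13.5ε²)/(1 − 15ε − 13.5ε²)). In particular the Banach–Mazur distance d(X, ℝ²) is at most this quantity. -/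
/-! Parametrise `X` by a real-linear map `L : ℂ → X` for which `L 1` and `L I` are unit vectors with
`‖L 1 + L I‖ = ‖L 1 - L I‖`. The near-parallelogram law applied to the axes and to the diagonals
shows that, on the unit circle, `‖L z‖²` and `‖L (I z)‖²` are both close to `2 - ‖L (conj z)‖²`,
hence to each other. The identities `z² + 1 = 2 (re z) z` and `z² - 1 = 2 (im z) I z` then give
`‖L (z²)‖² + 1 ≈ 2 ‖L z‖²`: doubling the angle nearly doubles the deviation of `‖L z‖²` from `1`.
Since this deviation is bounded, it must be small. -/

section Preliminaries

variable {E F : Type*} [NormedAddCommGroup E] [NormedSpace ℝ E]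
  [NormedAddCommGroup F] [NormedSpace ℝ F]

theorem norm_real_smul_sq (r : ℝ) (x : E) : ‖r • x‖ ^ 2 = r ^ 2 * ‖x‖ ^ 2 := by
  rw [norm_smul, mul_pow, Real.norm_eq_abs, sq_abs]

theorem sub_mul_le_of_mul_le_mul_comp_add {α : Type*} {f : α → ℝ} {φ : α → α} {a b c : ℝ}
    (hf : BddAbove (Set.range f)) (hb : 0 ≤ b) (hba : b ≤ a)
    (h : ∀ x, a * f x ≤ b * f (φ x) + c) (x : α) : (a - b) * f x ≤ c := by
  have : Nonempty α := ⟨x⟩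
  have h_iSup : a * (⨆ y, f y) ≤ b * (⨆ y, f y) + c := by
    rw [Real.mul_iSup_of_nonneg (hb.trans hba)]
    refine ciSup_le fun y ↦ (h y).trans ?_
    gcongr
    exact le_ciSup hf (φ y)
  calc (a - b) * f x ≤ (a - b) * ⨆ y, f y :=
        mul_le_mul_of_nonneg_left (le_ciSup hf x) (sub_nonneg.2 hba)
    _ ≤ c := by linarith

theorem exists_circle_norm_map_sq_eq (L : ℂ →ₗ[ℝ] E) (z : ℂ) :
    ∃ w : Circle, ‖L z‖ ^ 2 = ‖z‖ ^ 2 * ‖L w‖ ^ 2 := by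
  refine ⟨Circle.exp z.arg, ?_⟩
  rw [← norm_real_smul_sq, ← map_smul, Circle.coe_exp, Complex.real_smul,
    Complex.norm_mul_exp_arg_mul_I]

theorem exists_norm_eq_norm_add_eq_norm_sub (hE : 1 < Module.rank ℝ E) (u : E) :
    ∃ v : E, ‖v‖ = ‖u‖ ∧ ‖u + v‖ = ‖u - v‖ := by
  have hcont : ContinuousOn (fun v ↦ ‖u + v‖ - ‖u - v‖) (Metric.sphere 0 ‖u‖) := by fun_prop
  obtain ⟨v, hv, h⟩ := (isConnected_sphere hE 0 (norm_nonneg u)).isPreconnected.intermediate_value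
    (a := -u) (b := u) (by simp) (by simp) hcont (show (0 : ℝ) ∈ _ by constructor <;> simp)
  exact ⟨v, by simpa using hv, sub_eq_zero.1 h⟩

theorem norm_mul_norm_symm_le_sqrt_div (e : E ≃L[ℝ] F) {k K : ℝ} (hk : 0 < k)
    (hlower : ∀ x, k * ‖x‖ ^ 2 ≤ ‖e x‖ ^ 2) (hupper : ∀ x, ‖e x‖ ^ 2 ≤ K * ‖x‖ ^ 2) :
    ‖(e : E →L[ℝ] F)‖ * ‖(e.symm : F →L[ℝ] E)‖ ≤ √(K / k) := by
  have h_norm : ‖(e : E →L[ℝ] F)‖ ≤ √K :=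
    ContinuousLinearMap.opNorm_le_bound _ (Real.sqrt_nonneg K) fun x ↦ by
      simpa [Real.sqrt_mul' K (sq_nonneg ‖x‖)] using Real.le_sqrt_of_sq_le (hupper x)
  have h_norm_symm : ‖(e.symm : F →L[ℝ] E)‖ ≤ (√k)⁻¹ :=
    ContinuousLinearMap.opNorm_le_bound _ (by positivity) fun y ↦ by
      rw [inv_mul_eq_div, le_div_iff₀' (Real.sqrt_pos.2 hk)]
      simpa [Real.sqrt_mul hk.le] using Real.sqrt_le_sqrt (hlower (e.symm y))
  calc ‖(e : E →L[ℝ] F)‖ * ‖(e.symm : F →L[ℝ] E)‖ ≤ √K * (√k)⁻¹ := by gcongr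
    _ = √(K / k) := by rw [← div_eq_mul_inv, Real.sqrt_div' K hk.le]

theorem exists_continuousLinearEquiv_coe_eq [FiniteDimensional ℝ E] [FiniteDimensional ℝ F]
    (hdim : Module.finrank ℝ E = Module.finrank ℝ F) (L : E →ₗ[ℝ] F) {k : ℝ} (hk : 0 < k)
    (hlower : ∀ x, k * ‖x‖ ^ 2 ≤ ‖L x‖ ^ 2) : ∃ e : E ≃L[ℝ] F, ∀ x, e x = L x := by
  have hL : Function.Injective L := (injective_iff_map_eq_zero L).2 fun x hx ↦ by
    have hx' : k * ‖x‖ ^ 2 ≤ 0 := by simpa [hx] using hlower x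
    simpa using nonpos_of_mul_nonpos_right hx' hk
  exact ⟨(L.linearEquivOfInjective hL hdim).toContinuousLinearEquiv, fun _ ↦ rfl⟩

end Preliminaries

/-- The von Neumann–Jordan constant of `X` is at most `M`, written without division. The lower
bound by `1 / M` in the usual definition is this inequality for the pair `a + b`, `a - b`. -/
def VonNeumannJordanLE (X : Type*) [NormedAddCommGroup X] (M : ℝ) : Prop :=
  ∀ a b : X, ‖a + b‖ ^ 2 + ‖a - b‖ ^ 2 ≤ 2 * M * (‖a‖ ^ 2 + ‖b‖ ^ 2)

/-- A real-linear chart `ℂ → X` whose axes are unit vectors, orthogonal in the isosceles sense of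
James: `‖u + v‖ = ‖u - v‖`. -/
structure IsIsoscelesChart {X : Type*} [NormedAddCommGroup X] [NormedSpace ℝ X]
    (L : ℂ →ₗ[ℝ] X) : Prop where
  norm_one : ‖L 1‖ = 1
  norm_I : ‖L Complex.I‖ = 1
  norm_one_add_I : ‖L (1 + Complex.I)‖ = ‖L (1 - Complex.I)‖

section JordanVonNeumann

open Complex
open scoped ComplexConjugate

theorem conj_eq_re_sub_im_mul_I (z : ℂ) : conj z = z.re - z.im * I := by
  simp [Complex.ext_iff]

variable {X : Type*} [NormedAddCommGroup X]

theorem vonNeumannJordanLE_of_div_le {M : ℝ}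
    (h : ∀ a b : X, ¬(a = 0 ∧ b = 0) →
      (‖a + b‖ ^ 2 + ‖a - b‖ ^ 2) / (2 * (‖a‖ ^ 2 + ‖b‖ ^ 2)) ≤ M) :
    VonNeumannJordanLE X M := by
  intro a b
  by_cases hab : a = 0 ∧ b = 0
  · simp [hab.1, hab.2]
  · have hpos : 0 < 2 * (‖a‖ ^ 2 + ‖b‖ ^ 2) := by
      rcases not_and_or.1 hab with ha | hb
      · have := norm_pos_iff.2 ha
        positivity
      · have := norm_pos_iff.2 hb
        positivity
    linarith [(div_le_iff₀ hpos).1 (h a b hab)]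

theorem VonNeumannJordanLE.one_le [Nontrivial X] {M : ℝ} (h : VonNeumannJordanLE X M) :
    1 ≤ M := by
  obtain ⟨a, ha⟩ := exists_ne (0 : X)
  have hpos : 0 < ‖a‖ ^ 2 := by positivity
  have h0 : ‖a‖ ^ 2 + ‖a‖ ^ 2 ≤ 2 * M * ‖a‖ ^ 2 := by simpa using h a 0
  nlinarith

variable [NormedSpace ℝ X]

theorem exists_isIsoscelesChart (hX : 1 < Module.rank ℝ X) :
    ∃ L : ℂ →ₗ[ℝ] X, IsIsoscelesChart L := by
  have : Nontrivial X := (rank_pos_iff_nontrivial (R := ℝ)).1 (zero_lt_one.trans hX)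
  obtain ⟨u, hu⟩ := exists_norm_eq X zero_le_one
  obtain ⟨v, hv, huv⟩ := exists_norm_eq_norm_add_eq_norm_sub hX u
  exact ⟨reLm.smulRight u + imLm.smulRight v, by simpa, by simpa [hu] using hv,
    by simpa [sub_eq_add_neg] using huv⟩

namespace IsIsoscelesChart

variable {L : ℂ →ₗ[ℝ] X} {M : ℝ}

theorem norm_sq_add_norm_conj_sq_le (hL : IsIsoscelesChart L) (h : VonNeumannJordanLE X M)
    (z : ℂ) : ‖L z‖ ^ 2 + ‖L (conj z)‖ ^ 2 ≤ 2 * M * ‖z‖ ^ 2 := by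
  have h_add : z.re • (1 : ℂ) + z.im • I = z := by simp
  have h_sub : z.re • (1 : ℂ) - z.im • I = conj z := by simp [Complex.ext_iff]
  have h_axes := h (L (z.re • 1)) (L (z.im • I))
  rw [← map_add, ← map_sub, h_add, h_sub, map_smul, map_smul, norm_real_smul_sq,
    norm_real_smul_sq, hL.norm_one, hL.norm_I] at h_axes
  rw [Complex.sq_norm, normSq_apply]
  linarith

theorem two_le_mul_norm_one_add_I_sq (hL : IsIsoscelesChart L) (h : VonNeumannJordanLE X M) :
    2 ≤ M * ‖L (1 + I)‖ ^ 2 := by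
  have h_add : (1 + I) + (1 - I) = (2 : ℝ) • (1 : ℂ) := by rw [two_smul]; ring
  have h_sub : (1 + I) - (1 - I) = (2 : ℝ) • I := by rw [two_smul]; ring
  have h_diagonals := h (L (1 + I)) (L (1 - I))
  rw [← map_add, ← map_sub, h_add, h_sub, map_smul, map_smul, norm_real_smul_sq,
    norm_real_smul_sq, hL.norm_one, hL.norm_I, ← hL.norm_one_add_I] at h_diagonals
  linarith

theorem le_mul_norm_I_mul_sq_add_norm_conj_sq (hL : IsIsoscelesChart L)
    (h : VonNeumannJordanLE X M) (hM : 0 ≤ M) (z : ℂ) :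
    2 * ‖z‖ ^ 2 ≤ M ^ 2 * (‖L (I * z)‖ ^ 2 + ‖L (conj z)‖ ^ 2) := by
  have h_add : I * z + conj z = (z.re - z.im) • (1 + I) := by
    rw [real_smul, ofReal_sub]
    linear_combination -I * re_add_im z + conj_eq_re_sub_im_mul_I z + z.im * I_sq
  have h_sub : I * z - conj z = -(z.re + z.im) • (1 - I) := by
    rw [real_smul, ofReal_neg, ofReal_add]
    linear_combination -I * re_add_im z - conj_eq_re_sub_im_mul_I z + z.im * I_sq
  have h_rotated := h (L (I * z)) (L (conj z))
  rw [← map_add, ← map_sub, h_add, h_sub, map_smul, map_smul, norm_real_smul_sq,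
    norm_real_smul_sq, ← hL.norm_one_add_I] at h_rotated
  have hz : ‖z‖ ^ 2 = z.re ^ 2 + z.im ^ 2 := by rw [Complex.sq_norm, normSq_apply]; ring
  calc 2 * ‖z‖ ^ 2 ≤ M * ‖L (1 + I)‖ ^ 2 * ‖z‖ ^ 2 := by
        gcongr; exact hL.two_le_mul_norm_one_add_I_sq h
    _ = M / 2 * ((z.re - z.im) ^ 2 * ‖L (1 + I)‖ ^ 2
          + (-(z.re + z.im)) ^ 2 * ‖L (1 + I)‖ ^ 2) := by rw [hz]; ring
    _ ≤ M / 2 * (2 * M * (‖L (I * z)‖ ^ 2 + ‖L (conj z)‖ ^ 2)) := by gcongr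
    _ = M ^ 2 * (‖L (I * z)‖ ^ 2 + ‖L (conj z)‖ ^ 2) := by ring

theorem mul_norm_sq_sub_norm_I_mul_sq_le (hL : IsIsoscelesChart L)
    (h : VonNeumannJordanLE X M) (hM : 0 ≤ M) (z : ℂ) :
    M ^ 2 * (‖L z‖ ^ 2 - ‖L (I * z)‖ ^ 2) ≤ 2 * (M ^ 3 - 1) * ‖z‖ ^ 2 := by
  have h_axes := mul_le_mul_of_nonneg_left (hL.norm_sq_add_norm_conj_sq_le h z) (sq_nonneg M)
  linarith [hL.le_mul_norm_I_mul_sq_add_norm_conj_sq h hM z]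

theorem abs_mul_norm_sq_sub_norm_I_mul_sq_le (hL : IsIsoscelesChart L)
    (h : VonNeumannJordanLE X M) (hM : 0 ≤ M) (z : ℂ) :
    |M ^ 2 * (‖L z‖ ^ 2 - ‖L (I * z)‖ ^ 2)| ≤ 2 * (M ^ 3 - 1) * ‖z‖ ^ 2 := by
  have h_rotated := hL.mul_norm_sq_sub_norm_I_mul_sq_le h hM (I * z)
  have hII : I * (I * z) = -z := by rw [← mul_assoc, I_mul_I, neg_one_mul]
  rw [hII, map_neg, norm_neg, norm_mul, Complex.norm_I, one_mul] at h_rotated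
  exact abs_le.2 ⟨by linarith, hL.mul_norm_sq_sub_norm_I_mul_sq_le h hM z⟩

theorem two_mul_le_mul_norm_map_sq_add_one (hL : IsIsoscelesChart L)
    (h : VonNeumannJordanLE X M) {z : ℂ} (hz : ‖z‖ = 1) :
    2 * (z.re ^ 2 * ‖L z‖ ^ 2 + z.im ^ 2 * ‖L (I * z)‖ ^ 2) ≤ M * (‖L (z ^ 2)‖ ^ 2 + 1) := by
  have h_unit : z * conj z = 1 := by simp [mul_conj, normSq_eq_norm_sq, hz]
  have h_add : z ^ 2 + 1 = (2 * z.re) • z := by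
    rw [← h_unit, real_smul, ← add_conj]; ring
  have h_sub : z ^ 2 - 1 = (2 * z.im) • (I * z) := by
    rw [← h_unit, real_smul, ← mul_assoc, ← sub_conj]; ring
  have h_double := h (L (z ^ 2)) (L 1)
  rw [← map_add, ← map_sub, h_add, h_sub, map_smul, map_smul, norm_real_smul_sq,
    norm_real_smul_sq, hL.norm_one] at h_double
  linarith

theorem norm_map_sq_add_one_le_two_mul (hL : IsIsoscelesChart L)
    (h : VonNeumannJordanLE X M) {z : ℂ} (hz : ‖z‖ = 1) :
    ‖L (z ^ 2)‖ ^ 2 + 1 ≤ 2 * M * (z.re ^ 2 * ‖L z‖ ^ 2 + z.im ^ 2 * ‖L (I * z)‖ ^ 2) := by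
  have h_unit : z * conj z = 1 := by simp [mul_conj, normSq_eq_norm_sq, hz]
  have h_add : z.re • z + z.im • (I * z) = z ^ 2 := by
    rw [real_smul, real_smul, ← mul_assoc, ← add_mul, re_add_im, sq]
  have h_sub : z.re • z - z.im • (I * z) = 1 := by
    rw [← h_unit, conj_eq_re_sub_im_mul_I, real_smul, real_smul]; ring
  have h_double := h (L (z.re • z)) (L (z.im • (I * z)))
  rwa [← map_add, ← map_sub, h_add, h_sub, map_smul, map_smul, norm_real_smul_sq,
    norm_real_smul_sq, hL.norm_one, one_pow] at h_double

theorem abs_mul_weighted_norm_sq_sub_norm_sq_le (hL : IsIsoscelesChart L)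
    (h : VonNeumannJordanLE X M) (hM : 0 ≤ M) {z : ℂ} (hz : ‖z‖ = 1) :
    |M ^ 2 * (z.re ^ 2 * ‖L z‖ ^ 2 + z.im ^ 2 * ‖L (I * z)‖ ^ 2 - ‖L z‖ ^ 2)|
      ≤ 2 * (M ^ 3 - 1) := by
  have h_unit : z.re ^ 2 + z.im ^ 2 = 1 := by
    rw [← one_pow 2, ← hz, Complex.sq_norm, normSq_apply]; ring
  have h_im : z.im ^ 2 ≤ 1 := by linarith [sq_nonneg z.re]
  have h_eq : M ^ 2 * (z.re ^ 2 * ‖L z‖ ^ 2 + z.im ^ 2 * ‖L (I * z)‖ ^ 2 - ‖L z‖ ^ 2)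
      = -(z.im ^ 2 * (M ^ 2 * (‖L z‖ ^ 2 - ‖L (I * z)‖ ^ 2))) := by
    linear_combination M ^ 2 * ‖L z‖ ^ 2 * h_unit
  rw [h_eq, abs_neg, abs_mul, abs_of_nonneg (sq_nonneg z.im)]
  calc z.im ^ 2 * |M ^ 2 * (‖L z‖ ^ 2 - ‖L (I * z)‖ ^ 2)|
      ≤ |M ^ 2 * (‖L z‖ ^ 2 - ‖L (I * z)‖ ^ 2)| := mul_le_of_le_one_left (abs_nonneg _) h_im
    _ ≤ 2 * (M ^ 3 - 1) := by simpa [hz] using hL.abs_mul_norm_sq_sub_norm_I_mul_sq_le h hM z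

theorem mul_norm_map_circle_sq_le (hL : IsIsoscelesChart L) (h : VonNeumannJordanLE X M)
    (hM₀ : 0 ≤ M) (hM₂ : M ≤ 2) (w : Circle) :
    M ^ 2 * (2 - M) * ‖L w‖ ^ 2 ≤ 5 * M ^ 3 - 4 := by
  have h_bdd : BddAbove (Set.range fun w : Circle ↦ ‖L w‖ ^ 2) := by
    refine ⟨2 * M, ?_⟩
    rintro _ ⟨w, rfl⟩
    have h_axes := hL.norm_sq_add_norm_conj_sq_le h w
    rw [w.norm_coe] at h_axes
    linarith [sq_nonneg ‖L (conj (w : ℂ))‖]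
  have h_double (w : Circle) :
      2 * M ^ 2 * ‖L w‖ ^ 2 ≤ M ^ 3 * ‖L ↑(w ^ 2)‖ ^ 2 + (5 * M ^ 3 - 4) := by
    have h_weighted := mul_le_mul_of_nonneg_left
      (hL.two_mul_le_mul_norm_map_sq_add_one h w.norm_coe) (sq_nonneg M)
    have h_error := (abs_le.1 (hL.abs_mul_weighted_norm_sq_sub_norm_sq_le h hM₀ w.norm_coe)).1
    rw [Circle.coe_pow]
    linarith
  have h_coeff : M ^ 3 ≤ 2 * M ^ 2 := by nlinarith [sq_nonneg M]
  have h_max := sub_mul_le_of_mul_le_mul_comp_add h_bdd (pow_nonneg hM₀ 3) h_coeff h_double w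
  linarith

theorem le_mul_norm_map_circle_sq (hL : IsIsoscelesChart L) (h : VonNeumannJordanLE X M)
    (hM : 1 ≤ M) (w : Circle) :
    M + 4 - 4 * M ^ 3 ≤ M * (2 * M - 1) * ‖L w‖ ^ 2 := by
  have hM₀ : 0 ≤ M := zero_le_one.trans hM
  have h_bdd : BddAbove (Set.range fun w : Circle ↦ -‖L w‖ ^ 2) := by
    refine ⟨0, ?_⟩
    rintro _ ⟨w, rfl⟩
    exact neg_nonpos.2 (sq_nonneg ‖L w‖)
  have h_double (w : Circle) :
      2 * M ^ 2 * -‖L w‖ ^ 2 ≤ M * -‖L ↑(w ^ 2)‖ ^ 2 + (4 * M ^ 3 - M - 4) := by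
    have h_weighted := mul_le_mul_of_nonneg_left
      (hL.norm_map_sq_add_one_le_two_mul h w.norm_coe) hM₀
    have h_error := (abs_le.1 (hL.abs_mul_weighted_norm_sq_sub_norm_sq_le h hM₀ w.norm_coe)).2
    rw [Circle.coe_pow]
    linarith
  have h_coeff : M ≤ 2 * M ^ 2 := by nlinarith
  have h_min := sub_mul_le_of_mul_le_mul_comp_add h_bdd hM₀ h_coeff h_double w
  linarith

theorem norm_map_sq_le (hL : IsIsoscelesChart L) (h : VonNeumannJordanLE X M)
    (hM₀ : 0 < M) (hM₂ : M < 2) (z : ℂ) :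
    ‖L z‖ ^ 2 ≤ (5 * M ^ 3 - 4) / (M ^ 2 * (2 - M)) * ‖z‖ ^ 2 := by
  obtain ⟨w, hw⟩ := exists_circle_norm_map_sq_eq L z
  have hpos : 0 < M ^ 2 * (2 - M) := mul_pos (pow_pos hM₀ 2) (sub_pos.2 hM₂)
  rw [hw, mul_comm]
  gcongr
  rw [le_div_iff₀' hpos]
  exact hL.mul_norm_map_circle_sq_le h hM₀.le hM₂.le w

theorem le_norm_map_sq (hL : IsIsoscelesChart L) (h : VonNeumannJordanLE X M)
    (hM : 1 ≤ M) (z : ℂ) :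
    (M + 4 - 4 * M ^ 3) / (M * (2 * M - 1)) * ‖z‖ ^ 2 ≤ ‖L z‖ ^ 2 := by
  obtain ⟨w, hw⟩ := exists_circle_norm_map_sq_eq L z
  have hpos : 0 < M * (2 * M - 1) := mul_pos (by linarith) (by linarith)
  rw [hw, mul_comm]
  gcongr
  rw [div_le_iff₀' hpos]
  exact hL.le_mul_norm_map_circle_sq h hM w

end IsIsoscelesChart

end JordanVonNeumann

theorem vonNeumannJordan_upper_constant_le {ε : ℝ} (hε : 0 ≤ ε) (hε₁ : ε ≤ 1 / 15) :
    (5 * (ε + 1) ^ 3 - 4) / ((ε + 1) ^ 2 * (2 - (ε + 1))) ≤ 1 + 15 * ε + 13.5 * ε ^ 2 := by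
  rw [div_le_iff₀ (mul_pos (by positivity) (by linarith))]
  nlinarith [mul_nonneg hε (sub_nonneg.2 hε₁), pow_nonneg hε 2, pow_nonneg hε 3]

theorem le_vonNeumannJordan_lower_constant {ε : ℝ} (hε : 0 ≤ ε) :
    1 - 15 * ε - 13.5 * ε ^ 2 ≤
      (ε + 1 + 4 - 4 * (ε + 1) ^ 3) / ((ε + 1) * (2 * (ε + 1) - 1)) := by
  rw [le_div_iff₀ (by nlinarith)]
  nlinarith [pow_nonneg hε 2, pow_nonneg hε 3, pow_nonneg hε 4]

theorem two_dim_approx_jordan_von_neumann_general {X : Type*} [NormedAddCommGroup X]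
    [NormedSpace ℝ X] (hdim : Module.finrank ℝ X = 2) {M : ℝ} (hM : 4 * M ^ 3 < M + 4)
    (h : VonNeumannJordanLE X M) :
    ∃ Λ : X ≃L[ℝ] EuclideanSpace ℝ (Fin 2),
      ‖(Λ : X →L[ℝ] EuclideanSpace ℝ (Fin 2))‖ *
        ‖(Λ.symm : EuclideanSpace ℝ (Fin 2) →L[ℝ] X)‖ ≤
        √((5 * M ^ 3 - 4) / (M ^ 2 * (2 - M)) / ((M + 4 - 4 * M ^ 3) / (M * (2 * M - 1)))) := by
  have : FiniteDimensional ℝ X := Module.finite_of_finrank_eq_succ hdim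
  have : Nontrivial X := Module.nontrivial_of_finrank_pos (R := ℝ) (by lia)
  have hM₁ : 1 ≤ M := h.one_le
  have hM₂ : M < 2 := by nlinarith [sq_nonneg (M - 2)]
  have hrank : 1 < Module.rank ℝ X := by rw [← Module.finrank_eq_rank, hdim]; norm_num
  obtain ⟨L, hL⟩ := exists_isIsoscelesChart hrank
  let J : EuclideanSpace ℝ (Fin 2) ≃ₗᵢ[ℝ] ℂ := Complex.orthonormalBasisOneI.repr.symm
  have hk : 0 < (M + 4 - 4 * M ^ 3) / (M * (2 * M - 1)) :=
    div_pos (by linarith) (mul_pos (by linarith) (by linarith))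
  have hlower (x : EuclideanSpace ℝ (Fin 2)) :
      (M + 4 - 4 * M ^ 3) / (M * (2 * M - 1)) * ‖x‖ ^ 2 ≤ ‖L (J x)‖ ^ 2 :=
    J.norm_map x ▸ hL.le_norm_map_sq h hM₁ (J x)
  have hupper (x : EuclideanSpace ℝ (Fin 2)) :
      ‖L (J x)‖ ^ 2 ≤ (5 * M ^ 3 - 4) / (M ^ 2 * (2 - M)) * ‖x‖ ^ 2 :=
    J.norm_map x ▸ hL.norm_map_sq_le h (by linarith) hM₂ (J x)
  obtain ⟨e, he⟩ := exists_continuousLinearEquiv_coe_eq (by simp [hdim])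
    (L ∘ₗ J.toLinearEquiv.toLinearMap) hk hlower
  refine ⟨e.symm, ?_⟩
  rw [mul_comm]
  exact norm_mul_norm_symm_le_sqrt_div e hk (fun x ↦ (hlower x).trans_eq (by rw [he]; rfl))
    (fun x ↦ (hupper x).trans' (by rw [he]; rfl))

/-- **Two-dimensional approximate Jordan–von Neumann theorem** (Theorem 2.5).
A two-dimensional real normed vector space with von Neumann–Jordan constant at most
`ε + 1`, with `1 − 15ε − 13.5ε² > 0`, admits a linear isomorphism `Λ` onto the Euclidean
plane with `‖Λ‖·‖Λ⁻¹‖ ≤ √((1 + 15ε + 13.5ε²)/(1 − 15ε − 13.5ε²))`; in particular the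
Banach–Mazur distance from `X` to `ℝ²` is at most this quantity. -/
theorem two_dim_approx_jordan_von_neumann {X : Type*} [NormedAddCommGroup X]
    [NormedSpace ℝ X] (hdim : Module.finrank ℝ X = 2)
    (ε : ℝ) (hε : 0 ≤ ε) (hsmall : 0 < 1 - 15 * ε - 13.5 * ε ^ 2)
    (hJ : ∀ a b : X, ¬(a = 0 ∧ b = 0) →
      1 / (ε + 1) ≤ (‖a + b‖ ^ 2 + ‖a - b‖ ^ 2) / (2 * (‖a‖ ^ 2 + ‖b‖ ^ 2)) ∧
      (‖a + b‖ ^ 2 + ‖a - b‖ ^ 2) / (2 * (‖a‖ ^ 2 + ‖b‖ ^ 2)) ≤ ε + 1) :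
    ∃ Λ : X ≃L[ℝ] EuclideanSpace ℝ (Fin 2),
      ‖(Λ : X →L[ℝ] EuclideanSpace ℝ (Fin 2))‖ *
        ‖(Λ.symm : EuclideanSpace ℝ (Fin 2) →L[ℝ] X)‖ ≤
        Real.sqrt ((1 + 15 * ε + 13.5 * ε ^ 2) / (1 - 15 * ε - 13.5 * ε ^ 2)) := by
  obtain ⟨Λ, hΛ⟩ := two_dim_approx_jordan_von_neumann_general hdim (M := ε + 1)
    (by nlinarith [pow_nonneg hε 3]) (vonNeumannJordanLE_of_div_le fun a b hab ↦ (hJ a b hab).2)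
  exact ⟨Λ, hΛ.trans (Real.sqrt_le_sqrt (div_le_div₀ (by positivity)
    (vonNeumannJordan_upper_constant_le hε (by nlinarith)) hsmall
    (le_vonNeumannJordan_lower_constant hε)))⟩
end

section
/- Let X be an n-dimensional real normed vector space (n ≥ 1) and let x₁, …, x_{n−1} ∈ X. Then there exists x_n ∈ X with ‖x_n‖ = 1 and [x_n, xᵢ] = 0 for all i < n. -/
/-!
After normalising by the norm this is the Borsuk–Ulam theorem for the odd map
`v ↦ (‖v + x i‖ ^ 2 - ‖v - x i‖ ^ 2)ᵢ`. By Stone–Weierstrass and compactness of the sphere it is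
enough to solve `v₀ ^ 2 + ⋯ + vₘ ^ 2 = 1`, `vᵢ ^ eᵢ + Lᵢ v = 0` (`1 ≤ i ≤ m`) over the reals, where
`eᵢ` is odd and `Lᵢ` is an odd polynomial of smaller degree. Modulo these `m + 1` equations the even
polynomials form a real algebra whose dimension is the number of monomials of even degree with
`v₀`-exponent below `2` and `vᵢ`-exponents below `eᵢ`. The parity of the `v₀`-exponent being forced,
this number is the odd number `∏ eᵢ`. A commutative real algebra of odd dimension has a real
character, and a nonzero character of even polynomials is evaluation at a pair of points `±v`.
-/

open Module MvPolynomial Finsupp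
open scoped MonomialOrder

section RealPoints

theorem finrank_quotient_span_singleton_add_finrank_quotient_torsionOf {k A : Type*} [Field k]
    [CommRing A] [Algebra k A] [FiniteDimensional k A] (a : A) :
    finrank k (A ⧸ Ideal.span {a}) + finrank k (A ⧸ Ideal.torsionOf A A a) = finrank k A := by
  rw [((Ideal.quotTorsionOfEquivSpanSingleton A A a).restrictScalars k).finrank_eq,
    ← (Submodule.Quotient.restrictScalarsEquiv k (Ideal.span {a})).finrank_eq]
  exact ((Ideal.span {a}).restrictScalars k).finrank_quotient_add_finrank

theorem nonempty_algHom_real_of_odd_finrank_field {K : Type*} [Field K] [Algebra ℝ K]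
    (hodd : Odd (finrank ℝ K)) : Nonempty (K →ₐ[ℝ] ℝ) := by
  have : FiniteDimensional ℝ K := FiniteDimensional.of_finrank_pos hodd.pos
  rcases Real.nonempty_algEquiv_or K with ⟨⟨f⟩⟩ | ⟨⟨f⟩⟩
  · exact ⟨f⟩
  · rw [f.toLinearEquiv.finrank_eq, Complex.finrank_real_complex] at hodd
    exact absurd hodd (by decide)

/- A nonzero nonunit `a` splits `finrank ℝ A` as the sum of the dimensions of the proper quotients
`A ⧸ (a)` and `A ⧸ Ann a`, one of which is again odd. -/
theorem nonempty_algHom_real_of_odd_finrank {A : Type*} [CommRing A] [Algebra ℝ A]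
    (hodd : Odd (finrank ℝ A)) : Nonempty (A →ₐ[ℝ] ℝ) := by
  induction hn : finrank ℝ A using Nat.strong_induction_on generalizing A with
  | _ n ih =>
  subst hn
  have : FiniteDimensional ℝ A := FiniteDimensional.of_finrank_pos hodd.pos
  have : Nontrivial A := nontrivial_of_finrank_pos hodd.pos
  by_cases hA : IsField A
  · let := hA.toField
    exact nonempty_algHom_real_of_odd_finrank_field hodd
  have lift (I : Ideal A) (hI : Odd (finrank ℝ (A ⧸ I)))
      (hlt : finrank ℝ (A ⧸ I) < finrank ℝ A) : Nonempty (A →ₐ[ℝ] ℝ) :=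
    (ih _ hlt hI rfl).map fun χ => χ.comp (Ideal.Quotient.mkₐ ℝ I)
  obtain ⟨a, ha₀, ha⟩ := Ring.exists_not_isUnit_of_not_isField hA
  have hsum := finrank_quotient_span_singleton_add_finrank_quotient_torsionOf (k := ℝ) a
  have : Nontrivial (A ⧸ Ideal.span {a}) :=
    Ideal.Quotient.nontrivial_iff.mpr (by rwa [Ne, Ideal.span_singleton_eq_top])
  have : Nontrivial (A ⧸ Ideal.torsionOf A A a) :=
    Ideal.Quotient.nontrivial_iff.mpr (by rwa [Ne, Ideal.torsionOf_eq_top_iff])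
  have hspan : 0 < finrank ℝ (A ⧸ Ideal.span {a}) := finrank_pos
  have htors : 0 < finrank ℝ (A ⧸ Ideal.torsionOf A A a) := finrank_pos
  rw [← hsum, Nat.odd_add] at hodd
  by_cases h : Odd (finrank ℝ (A ⧸ Ideal.span {a}))
  · exact lift _ h (by omega)
  · exact lift (Ideal.torsionOf A A a) (by grind) (by omega)

end RealPoints

section MonicBasis

variable {σ R : Type*} [CommRing R] {m : MonomialOrder σ} {p : (σ →₀ ℕ) → MvPolynomial σ R}

theorem linearIndependent_of_monic_of_degree_eq (hp : ∀ b, m.Monic (p b))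
    (hdeg : ∀ b, m.degree (p b) = b) : LinearIndependent R p := by
  rw [linearIndependent_iff]
  intro c hc
  by_contra hne
  obtain ⟨d, hd, hmax⟩ :=
    c.support.exists_max_image m.toSyn (Finsupp.support_nonempty_iff.mpr hne)
  have hcoeff : coeff d (Finsupp.linearCombination R p c) = c d := by
    rw [Finsupp.linearCombination_apply, Finsupp.sum, coeff_sum, Finset.sum_eq_single_of_mem d hd]
    · have hlead : coeff d (p d) = 1 := by simpa only [hdeg] using (hp d).coeff_degree
      rw [coeff_smul, hlead, smul_eq_mul, mul_one]
    · intro b hb hbd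
      have hlt : m.degree (p b) ≺[m] d := by
        rw [hdeg]
        exact (hmax b hb).lt_of_ne (m.toSyn.injective.ne hbd)
      rw [coeff_smul, m.coeff_eq_zero_of_lt hlt, smul_zero]
  rw [hc, coeff_zero] at hcoeff
  exact Finsupp.mem_support_iff.mp hd hcoeff.symm

theorem span_range_eq_top_of_monic_of_degree_eq (hp : ∀ b, m.Monic (p b))
    (hdeg : ∀ b, m.degree (p b) = b) : Submodule.span R (Set.range p) = ⊤ := by
  classical
  have hmon (d : σ →₀ ℕ) : monomial d 1 ∈ Submodule.span R (Set.range p) := by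
    induction hs : m.toSyn d using WellFoundedLT.induction generalizing d with
    | _ s ih =>
    subst hs
    have hlower (b) (hb : b ∈ (p d - monomial d 1).support) : b ≺[m] d := by
      have hbd : b ≠ d := by
        rintro rfl
        have := (hp b).coeff_degree
        rw [hdeg] at this
        simp [this] at hb
      have hle : b ≼[m] d := by
        rw [← hdeg d]
        exact m.le_degree (by simpa [coeff_monomial, hbd.symm] using hb)
      exact hle.lt_of_ne (m.toSyn.injective.ne hbd)
    rw [← sub_sub_cancel (p d) (monomial d 1), as_sum (p d - monomial d 1)]
    refine sub_mem (Submodule.subset_span ⟨d, rfl⟩) (sum_mem fun b hb => ?_)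
    rw [← mul_one (coeff b (p d - monomial d 1)), ← smul_eq_mul, ← smul_monomial]
    exact Submodule.smul_mem _ _ (ih _ (hlower b hb) b rfl)
  rw [eq_top_iff, ← (basisMonomials σ R).span_eq, Submodule.span_le]
  rintro _ ⟨d, rfl⟩
  rw [coe_basisMonomials]
  exact hmon d

end MonicBasis

section AdicMonomial

variable {σ R : Type*} [Fintype σ] [CommRing R]

/-- The monomial `X ^ b` with `X i ^ e i` traded for `g i` as often as possible. When `g i` is monic
of degree `single i (e i)`, these products form the analogue, for the system `g`, of the expansion
of a univariate polynomial in powers of a monic one. -/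
noncomputable def adicMonomial (g : σ → MvPolynomial σ R) (e : σ → ℕ) (b : σ →₀ ℕ) :
    MvPolynomial σ R :=
  ∏ i, X i ^ (b i % e i) * g i ^ (b i / e i)

variable {g : σ → MvPolynomial σ R} {e : σ → ℕ} {m : MonomialOrder σ}

theorem mul_adicMonomial (he : ∀ i, 0 < e i) (i : σ) (b : σ →₀ ℕ) :
    g i * adicMonomial g e b = adicMonomial g e (b + single i (e i)) := by
  classical
  rw [adicMonomial, adicMonomial, ← Finset.mul_prod_erase _ _ (Finset.mem_univ i),
    ← Finset.mul_prod_erase _ _ (Finset.mem_univ i), ← mul_assoc]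
  congr 1
  · simp [Nat.add_div_right _ (he i)]
    ring
  · refine Finset.prod_congr rfl fun j hj => ?_
    simp [single_eq_of_ne (Finset.ne_of_mem_erase hj)]

theorem monic_adicMonomial (hg : ∀ i, m.Monic (g i)) (b : σ →₀ ℕ) :
    m.Monic (adicMonomial g e b) :=
  .prod fun i _ => .mul (.pow m.monic_X) (.pow (hg i))

theorem degree_adicMonomial [Nontrivial R] (hg : ∀ i, m.Monic (g i))
    (hdeg : ∀ i, m.degree (g i) = single i (e i)) (b : σ →₀ ℕ) :
    m.degree (adicMonomial g e b) = b := by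
  have hX (i : σ) : m.Monic (X i : MvPolynomial σ R) := m.monic_X
  have hfactor (i : σ) : m.degree (X i ^ (b i % e i) * g i ^ (b i / e i)) = single i (b i) := by
    rw [m.degree_mul_of_isRegular_left, m.degree_pow_of_pow_leadingCoeff_ne_zero,
      m.degree_pow_of_pow_leadingCoeff_ne_zero, m.degree_X, hdeg, smul_single, smul_single,
      ← single_add]
    · simp [Nat.mod_add_div']
    · simp [(hg i).leadingCoeff_eq_one]
    · simp
    · rw [(hX i).pow.leadingCoeff_eq_one]
      exact isRegular_one
    · exact (hg i).pow.ne_zero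
  rw [adicMonomial, m.degree_prod_of_regular]
  · simp only [hfactor, univ_sum_single]
  · intro i _
    rw [((hX i).pow.mul (hg i).pow).leadingCoeff_eq_one]
    exact isRegular_one

theorem linearIndependent_adicMonomial [Nontrivial R] (hg : ∀ i, m.Monic (g i))
    (hdeg : ∀ i, m.degree (g i) = single i (e i)) : LinearIndependent R (adicMonomial g e) :=
  linearIndependent_of_monic_of_degree_eq (monic_adicMonomial hg) (degree_adicMonomial hg hdeg)

theorem span_range_adicMonomial [Nontrivial R] (hg : ∀ i, m.Monic (g i))
    (hdeg : ∀ i, m.degree (g i) = single i (e i)) :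
    Submodule.span R (Set.range (adicMonomial g e)) = ⊤ :=
  span_range_eq_top_of_monic_of_degree_eq (monic_adicMonomial hg) (degree_adicMonomial hg hdeg)

theorem adicMonomial_mem_span_range (he : ∀ i, 0 < e i) {b : σ →₀ ℕ} {i : σ} (hi : e i ≤ b i) :
    adicMonomial g e b ∈ Ideal.span (Set.range g) := by
  obtain ⟨c, rfl⟩ := exists_add_of_le (single_le_iff.mpr hi)
  rw [add_comm, ← mul_adicMonomial he]
  exact Ideal.mul_mem_right _ _ (Ideal.subset_span ⟨i, rfl⟩)

theorem restrictScalars_span_range_eq_span_adicMonomial [Nontrivial R] (he : ∀ i, 0 < e i)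
    (hg : ∀ i, m.Monic (g i)) (hdeg : ∀ i, m.degree (g i) = single i (e i)) :
    (Ideal.span (Set.range g)).restrictScalars R =
      Submodule.span R (adicMonomial g e '' {b | ∃ i, e i ≤ b i}) := by
  apply le_antisymm
  · have hmul (i : σ) (q : MvPolynomial σ R) :
        g i * q ∈ Submodule.span R (adicMonomial g e '' {b | ∃ i, e i ≤ b i}) := by
      have hq : q ∈ Submodule.span R (Set.range (adicMonomial g e)) := by
        rw [span_range_adicMonomial hg hdeg]
        trivial
      induction hq using Submodule.span_induction with
      | zero => simp
      | add p q _ _ hp hq => rw [mul_add]; exact add_mem hp hq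
      | smul r q _ hq => rw [mul_smul_comm]; exact Submodule.smul_mem _ r hq
      | mem q hq =>
        obtain ⟨b, rfl⟩ := hq
        rw [mul_adicMonomial he]
        exact Submodule.subset_span ⟨_, ⟨i, by simp⟩, rfl⟩
    intro p hp
    obtain ⟨q, rfl⟩ := (Ideal.mem_span_range_iff_exists_fun).mp hp
    exact sum_mem fun i _ => mul_comm (q i) (g i) ▸ hmul i (q i)
  · rw [Submodule.span_le]
    rintro _ ⟨b, ⟨i, hi⟩, rfl⟩
    exact adicMonomial_mem_span_range he hi

theorem linearIndependent_mk_adicMonomial [Nontrivial R] (he : ∀ i, 0 < e i)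
    (hg : ∀ i, m.Monic (g i)) (hdeg : ∀ i, m.degree (g i) = single i (e i)) {s : Set (σ →₀ ℕ)}
    (hs : ∀ b ∈ s, ∀ i, b i < e i) :
    LinearIndependent R fun b : s =>
      Ideal.Quotient.mkₐ R (Ideal.span (Set.range g)) (adicMonomial g e b) := by
  have hli := linearIndependent_adicMonomial hg hdeg
  have hker : (Ideal.Quotient.mkₐ R (Ideal.span (Set.range g))).toLinearMap.ker =
      (Ideal.span (Set.range g)).restrictScalars R := by
    ext p
    simp [Ideal.Quotient.eq_zero_iff_mem]
  refine (hli.comp _ Subtype.val_injective).map (f := (Ideal.Quotient.mkₐ R _).toLinearMap) ?_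
  rw [hker, restrictScalars_span_range_eq_span_adicMonomial he hg hdeg, Set.range_comp,
    Subtype.range_coe]
  refine hli.disjoint_span_image (Set.disjoint_left.mpr ?_)
  rintro b hb ⟨i, hi⟩
  exact (hs b hb i).not_ge hi

end AdicMonomial

section Parity

variable {σ R : Type*} [CommRing R]

/-- Parity of a polynomial: only monomials of degree congruent to `n` modulo `2` occur in `p`. The
even and odd polynomials are those of parity `0` and `1`, and `0` has both parities. -/
abbrev HasParity (p : MvPolynomial σ R) (n : ZMod 2) : Prop :=
  p.IsWeightedHomogeneous (1 : σ → ZMod 2) n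

/-- The algebra of even polynomials, those of parity `0`. -/
noncomputable def evenSubalgebra (σ R : Type*) [CommRing R] : Subalgebra R (MvPolynomial σ R) :=
  have := WeightedHomogeneousSubmodule.gradedMonoid (R := R) (w := (1 : σ → ZMod 2))
  SetLike.GradeZero.subalgebra (weightedHomogeneousSubmodule R (1 : σ → ZMod 2))

theorem mem_evenSubalgebra {p : MvPolynomial σ R} : p ∈ evenSubalgebra σ R ↔ HasParity p 0 :=
  Iff.rfl

theorem weight_one_eq_natCast_degree (b : σ →₀ ℕ) :
    weight (1 : σ → ZMod 2) b = (b.degree : ZMod 2) := by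
  simp [weight_apply, degree_apply, Finsupp.sum]

theorem hasParity_adicMonomial [Fintype σ] {g : σ → MvPolynomial σ R} {e : σ → ℕ}
    (hpar : ∀ i, HasParity (g i) (e i)) (b : σ →₀ ℕ) :
    HasParity (adicMonomial g e b) (b.degree : ZMod 2) := by
  have hfactor (i : σ) : HasParity (X i ^ (b i % e i) * g i ^ (b i / e i)) (b i : ZMod 2) := by
    convert ((isWeightedHomogeneous_X R _ i).pow (b i % e i)).mul ((hpar i).pow (b i / e i)) using 1
    rw [Pi.one_apply, nsmul_one, nsmul_eq_mul]
    exact_mod_cast congrArg Nat.cast (Nat.mod_add_div' (b i) (e i)).symm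
  rw [degree_eq_sum, Nat.cast_sum]
  exact .prod _ _ _ fun i _ => hfactor i

theorem span_even_adicMonomial_eq_toSubmodule_evenSubalgebra [Nontrivial R] [Fintype σ]
    {m : MonomialOrder σ} {g : σ → MvPolynomial σ R} {e : σ → ℕ} (hg : ∀ i, m.Monic (g i))
    (hdeg : ∀ i, m.degree (g i) = single i (e i)) (hpar : ∀ i, HasParity (g i) (e i)) :
    Submodule.span R (adicMonomial g e '' {b | Even b.degree}) =
      (evenSubalgebra σ R).toSubmodule := by
  apply le_antisymm
  · rw [Submodule.span_le]
    rintro _ ⟨b, hb, rfl⟩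
    rw [SetLike.mem_coe, Subalgebra.mem_toSubmodule, mem_evenSubalgebra,
      ← ZMod.natCast_eq_zero_iff_even.mpr hb]
    exact hasParity_adicMonomial hpar b
  · intro p hp
    have hmem (q : MvPolynomial σ R) : weightedHomogeneousComponent (1 : σ → ZMod 2) 0 q ∈
        Submodule.span R (adicMonomial g e '' {b | Even b.degree}) := by
      have hq : q ∈ Submodule.span R (Set.range (adicMonomial g e)) := by
        rw [span_range_adicMonomial hg hdeg]
        trivial
      induction hq using Submodule.span_induction with
      | zero => simp
      | add p q _ _ hp hq => rw [map_add]; exact add_mem hp hq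
      | smul r q _ hq => rw [map_smul]; exact Submodule.smul_mem _ r hq
      | mem q hq =>
        obtain ⟨b, rfl⟩ := hq
        rw [weightedHomogeneousComponent_of_mem (hasParity_adicMonomial hpar b)]
        split_ifs with hb
        · exact Submodule.subset_span ⟨b, ZMod.natCast_eq_zero_iff_even.mp hb.symm, rfl⟩
        · exact zero_mem _
    rw [← (mem_evenSubalgebra.mp hp).weightedHomogeneousComponent_same]
    exact hmem p

theorem toSubmodule_map_mk_evenSubalgebra [Nontrivial R] [Fintype σ] {m : MonomialOrder σ}
    {g : σ → MvPolynomial σ R} {e : σ → ℕ} (he : ∀ i, 0 < e i) (hg : ∀ i, m.Monic (g i))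
    (hdeg : ∀ i, m.degree (g i) = single i (e i)) (hpar : ∀ i, HasParity (g i) (e i)) :
    ((evenSubalgebra σ R).map (Ideal.Quotient.mkₐ R (Ideal.span (Set.range g)))).toSubmodule =
      Submodule.span R (Set.range fun b : {b : σ →₀ ℕ | (∀ i, b i < e i) ∧ Even b.degree} =>
        Ideal.Quotient.mkₐ R (Ideal.span (Set.range g)) (adicMonomial g e b)) := by
  rw [Subalgebra.map_toSubmodule,
    ← span_even_adicMonomial_eq_toSubmodule_evenSubalgebra hg hdeg hpar, Submodule.map_span]
  apply le_antisymm
  · rw [Submodule.span_le]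
    rintro _ ⟨_, ⟨b, hb, rfl⟩, rfl⟩
    by_cases hred : ∀ i, b i < e i
    · exact Submodule.subset_span ⟨⟨b, hred, hb⟩, rfl⟩
    · push Not at hred
      obtain ⟨i, hi⟩ := hred
      have hzero := Ideal.Quotient.eq_zero_iff_mem.mpr (adicMonomial_mem_span_range (g := g) he hi)
      simp [hzero]
  · refine Submodule.span_mono ?_
    rintro _ ⟨⟨b, -, hb⟩, rfl⟩
    exact ⟨_, ⟨b, hb, rfl⟩, rfl⟩

theorem finrank_map_mk_evenSubalgebra [Nontrivial R] [Finite σ] {m : MonomialOrder σ}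
    {g : σ → MvPolynomial σ R} {e : σ → ℕ} (he : ∀ i, 0 < e i) (hg : ∀ i, m.Monic (g i))
    (hdeg : ∀ i, m.degree (g i) = single i (e i)) (hpar : ∀ i, HasParity (g i) (e i)) :
    finrank R ((evenSubalgebra σ R).map (Ideal.Quotient.mkₐ R (Ideal.span (Set.range g)))) =
      Nat.card {b : σ →₀ ℕ | (∀ i, b i < e i) ∧ Even b.degree} := by
  have := Fintype.ofFinite σ
  rw [← Subalgebra.finrank_toSubmodule, toSubmodule_map_mk_evenSubalgebra he hg hdeg hpar]
  exact finrank_eq_nat_card_basis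
    (Basis.span (linearIndependent_mk_adicMonomial he hg hdeg fun b hb => hb.1))

end Parity

section Character

variable {σ : Type*}

theorem X_mul_X_mem_evenSubalgebra {R : Type*} [CommRing R] (i j : σ) :
    (X i * X j : MvPolynomial σ R) ∈ evenSubalgebra σ R := by
  rw [mem_evenSubalgebra, ← CharTwo.add_self_eq_zero (1 : ZMod 2)]
  exact (isWeightedHomogeneous_X R _ i).mul (isWeightedHomogeneous_X R _ j)

/-- The quadratic monomial `X i * X j` as an even polynomial. -/
noncomputable def evenXMulX (R : Type*) [CommRing R] (i j : σ) : evenSubalgebra σ R :=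
  ⟨X i * X j, X_mul_X_mem_evenSubalgebra i j⟩

@[simp]
theorem coe_evenXMulX {R : Type*} [CommRing R] (i j : σ) :
    (evenXMulX R i j : MvPolynomial σ R) = X i * X j :=
  rfl

theorem monomial_mul_evenXMulX_pow {R : Type*} [CommRing R] {b : σ →₀ ℕ} {N : ℕ}
    (hN : b.degree = N + N) (hb : monomial b 1 ∈ evenSubalgebra σ R) (k : σ) :
    (⟨monomial b 1, hb⟩ : evenSubalgebra σ R) * evenXMulX R k k ^ N =
      b.prod fun i n => evenXMulX R i k ^ n := by
  apply Subtype.ext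
  rw [Finsupp.prod, ← Subalgebra.coe_val, map_prod]
  simp only [Subalgebra.coe_val, SubmonoidClass.coe_pow, MulMemClass.coe_mul, coe_evenXMulX,
    mul_pow, Finset.prod_mul_distrib, Finset.prod_pow_eq_pow_sum, ← degree_apply, hN, pow_add,
    monomial_eq, C_1, one_mul, Finsupp.prod]

/- Up to sign `χ` should be evaluation at `v i = √(χ (X i ^ 2))`; the factor `X k` fixes the signs.
On a monomial of degree `2 N` use `X ^ b * (X k * X k) ^ N = ∏ i, (X i * X k) ^ b i`. -/
theorem exists_forall_algHom_evenSubalgebra_eq_eval (χ : evenSubalgebra σ ℝ →ₐ[ℝ] ℝ) {k : σ}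
    (hk : 0 < χ (evenXMulX ℝ k k)) :
    ∃ v : σ → ℝ, ∀ p : evenSubalgebra σ ℝ, χ p = eval v p.1 := by
  set c := χ (evenXMulX ℝ k k) with hc
  let v (i : σ) : ℝ := χ (evenXMulX ℝ i k) / √c
  have hv (i : σ) : χ (evenXMulX ℝ i k) = v i * √c :=
    (div_mul_cancel₀ _ (Real.sqrt_pos.mpr hk).ne').symm
  have hmonomial (b : σ →₀ ℕ) (hb : monomial b 1 ∈ evenSubalgebra σ ℝ) :
      χ ⟨monomial b 1, hb⟩ = eval v (monomial b 1) := by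
    obtain ⟨N, hN⟩ : Even b.degree := by
      rw [← ZMod.natCast_eq_zero_iff_even, ← weight_one_eq_natCast_degree]
      exact hb (by classical simp)
    have hχ := congrArg χ (monomial_mul_evenXMulX_pow hN hb k)
    rw [map_mul, map_pow, ← hc, Finsupp.prod, map_prod] at hχ
    simp only [map_pow, hv, mul_pow, Finset.prod_mul_distrib, Finset.prod_pow_eq_pow_sum] at hχ
    rw [← degree_apply, hN, ← two_mul, pow_mul, Real.sq_sqrt hk.le] at hχ
    rw [mul_right_cancel₀ (pow_pos hk N).ne' hχ, eval_monomial, one_mul, Finsupp.prod]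
  refine ⟨v, fun ⟨p, hp⟩ => ?_⟩
  induction hp using IsWeightedHomogeneous.induction_on with
  | zero => exact (map_zero χ).trans (map_zero (eval v)).symm
  | add p q hp hq ihp ihq =>
    rw [map_add, ← ihp, ← ihq]
    exact map_add χ ⟨p, hp⟩ ⟨q, hq⟩
  | monomial b r hb =>
    have h1 : monomial b 1 ∈ evenSubalgebra σ ℝ := isWeightedHomogeneous_monomial _ b 1 hb
    have hr : (monomial b r : MvPolynomial σ ℝ) = r • monomial b 1 := by simp [smul_monomial]
    calc
      χ ⟨monomial b r, _⟩ = χ (r • ⟨monomial b 1, h1⟩) := congrArg χ (Subtype.ext hr)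
      _ = eval v (monomial b r) := by rw [map_smul, hmonomial, hr, smul_eval, smul_eq_mul]

theorem exists_eval_eq_zero_of_odd_card [Fintype σ] {m : MonomialOrder σ}
    {g : σ → MvPolynomial σ ℝ} {e : σ → ℕ} (he : ∀ i, 0 < e i) (hg : ∀ i, m.Monic (g i))
    (hdeg : ∀ i, m.degree (g i) = single i (e i)) (hpar : ∀ i, HasParity (g i) (e i))
    (hodd : Odd (Nat.card {b : σ →₀ ℕ | (∀ i, b i < e i) ∧ Even b.degree}))
    (hsphere : ∑ i, X i ^ 2 - 1 ∈ Ideal.span (Set.range g)) :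
    ∃ v : σ → ℝ, ∑ i, v i ^ 2 = 1 ∧ ∀ i, eval v (g i) = 0 := by
  rw [← finrank_map_mk_evenSubalgebra he hg hdeg hpar] at hodd
  obtain ⟨ψ⟩ := nonempty_algHom_real_of_odd_finrank hodd
  let χ : evenSubalgebra σ ℝ →ₐ[ℝ] ℝ := ψ.comp (AlgHom.subalgebraMap _ _)
  have hχ (p : evenSubalgebra σ ℝ) (hp : p.1 ∈ Ideal.span (Set.range g)) : χ p = 0 := by
    have hzero : AlgHom.subalgebraMap (evenSubalgebra σ ℝ)
        (Ideal.Quotient.mkₐ ℝ (Ideal.span (Set.range g))) p = 0 :=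
      Subtype.ext (Ideal.Quotient.eq_zero_iff_mem.mpr hp)
    exact (congrArg ψ hzero).trans (map_zero ψ)
  have hnorm : ∑ i, χ (evenXMulX ℝ i i) = 1 := by
    have := hχ (∑ i, evenXMulX ℝ i i - 1) (by simpa [← sq] using hsphere)
    rwa [map_sub, map_sum, map_one, sub_eq_zero] at this
  obtain ⟨k, -, hk⟩ : ∃ k ∈ Finset.univ, 0 < χ (evenXMulX ℝ k k) :=
    Finset.exists_lt_of_sum_lt (f := 0) (by simp [hnorm])
  obtain ⟨v, hv⟩ := exists_forall_algHom_evenSubalgebra_eq_eval χ hk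
  refine ⟨v, by simpa [hv, ← sq] using hnorm, fun i => ?_⟩
  have heven : g i * g i ∈ evenSubalgebra σ ℝ := by
    rw [mem_evenSubalgebra, ← CharTwo.add_self_eq_zero (e i : ZMod 2)]
    exact (hpar i).mul (hpar i)
  have hsq := hχ ⟨g i * g i, heven⟩ (Ideal.mul_mem_left _ _ (Ideal.subset_span ⟨i, rfl⟩))
  rwa [hv, map_mul, mul_self_eq_zero] at hsq

end Character

section System

theorem monic_X_pow_add {σ R : Type*} [CommRing R] [Nontrivial R] {m : MonomialOrder σ} {i : σ}
    {n : ℕ} {q : MvPolynomial σ R} (hq : m.degree q ≺[m] single i n) : m.Monic (X i ^ n + q) := by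
  classical
  refine MonomialOrder.Monic.add_of_lt (.pow m.monic_X) ?_
  rwa [X_pow_eq_monomial, m.degree_monomial, if_neg one_ne_zero]

theorem degree_X_pow_add {σ R : Type*} [CommRing R] [Nontrivial R] {m : MonomialOrder σ} {i : σ}
    {n : ℕ} {q : MvPolynomial σ R} (hq : m.degree q ≺[m] single i n) :
    m.degree (X i ^ n + q) = single i n := by
  classical
  have hX : m.degree (X i ^ n : MvPolynomial σ R) = single i n := by
    rw [X_pow_eq_monomial, m.degree_monomial, if_neg one_ne_zero]
  rw [m.degree_add_of_lt (by rwa [hX]), hX]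

theorem degLex_degree_lt_single_of_totalDegree_lt {σ R : Type*} [CommRing R] [LinearOrder σ]
    [WellFoundedGT σ] {q : MvPolynomial σ R} {i : σ} {n : ℕ} (hq : q.totalDegree < n) :
    MonomialOrder.degLex.degree q ≺[MonomialOrder.degLex] single i n := by
  rw [MonomialOrder.degLex_lt_iff, DegLex.lt_iff]
  left
  simpa [degree_degLexDegree] using hq

theorem degLex_degree_sum_succ_sq_sub_one_lt (R : Type*) [CommRing R] (m : ℕ) :
    MonomialOrder.degLex.degree (∑ i : Fin m, X i.succ ^ 2 - 1 : MvPolynomial (Fin (m + 1)) R)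
      ≺[MonomialOrder.degLex] single 0 2 := by
  have hone : MonomialOrder.degLex.degree (1 : MvPolynomial (Fin (m + 1)) R)
      ≺[MonomialOrder.degLex] single 0 2 :=
    degLex_degree_lt_single_of_totalDegree_lt (by simp)
  refine MonomialOrder.degree_sub_le.trans_lt (max_lt ?_ hone)
  refine MonomialOrder.degree_sum_le.trans_lt
    ((Finset.sup_lt_iff (bot_le.trans_lt hone)).mpr fun i _ => ?_)
  rw [X_pow_eq_monomial]
  refine (MonomialOrder.degree_monomial_le _).trans_lt ?_
  rw [← mul_one 2, ← smul_eq_mul, ← smul_single, ← smul_single, map_nsmul, map_nsmul]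
  exact nsmul_lt_nsmul_right two_ne_zero (MonomialOrder.degLex_single_lt_iff.mpr (Fin.succ_pos i))

theorem card_even_lt_cons_two {m : ℕ} (e : Fin m → ℕ) :
    Nat.card {b : Fin (m + 1) →₀ ℕ |
      (∀ i, b i < (Fin.cons 2 e : Fin (m + 1) → ℕ) i) ∧ Even b.degree} = ∏ i, e i := by
  let tail (b : {b : Fin (m + 1) →₀ ℕ |
      (∀ i, b i < (Fin.cons 2 e : Fin (m + 1) → ℕ) i) ∧ Even b.degree}) (i : Fin m) : Fin (e i) :=
    ⟨b.1 i.succ, b.2.1 i.succ⟩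
  have htail : Function.Bijective tail := by
    constructor
    · rintro ⟨a, ha, haeven⟩ ⟨b, hb, hbeven⟩ hab
      have hsucc (i : Fin m) : a i.succ = b i.succ := congrArg Fin.val (congrFun hab i)
      have ha₀ : a 0 < 2 := ha 0
      have hb₀ : b 0 < 2 := hb 0
      simp only [degree_eq_sum, Fin.sum_univ_succ, hsucc, Nat.even_iff] at haeven hbeven
      have hzero : a 0 = b 0 := by omega
      exact Subtype.ext (Finsupp.ext (Fin.cases hzero hsucc))
    · intro c
      refine ⟨⟨equivFunOnFinite.symm (Fin.cons ((∑ i, (c i : ℕ)) % 2) fun i => c i), ?_, ?_⟩, rfl⟩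
      · exact Fin.cases (Nat.mod_lt _ two_pos) fun i => (c i).2
      · simp only [degree_eq_sum, Fin.sum_univ_succ, equivFunOnFinite_symm_apply_apply,
          Fin.cons_zero, Fin.cons_succ, Nat.even_iff]
        omega
  rw [Nat.card_congr (Equiv.ofBijective tail htail)]
  simp

theorem exists_sum_sq_eq_one_and_pow_add_eval_eq_zero {m : ℕ} {e : Fin m → ℕ}
    {L : Fin m → MvPolynomial (Fin (m + 1)) ℝ} (he : ∀ i, Odd (e i))
    (hpar : ∀ i, HasParity (L i) 1) (hdeg : ∀ i, (L i).totalDegree < e i) :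
    ∃ v : Fin (m + 1) → ℝ, ∑ i, v i ^ 2 = 1 ∧ ∀ i, v i.succ ^ e i + eval v (L i) = 0 := by
  let E : Fin (m + 1) → ℕ := Fin.cons 2 e
  let q : Fin (m + 1) → MvPolynomial (Fin (m + 1)) ℝ := Fin.cons (∑ i : Fin m, X i.succ ^ 2 - 1) L
  have hq : ∀ i, MonomialOrder.degLex.degree (q i) ≺[MonomialOrder.degLex] single i (E i) :=
    Fin.cases (degLex_degree_sum_succ_sq_sub_one_lt ℝ m) fun i =>
      degLex_degree_lt_single_of_totalDegree_lt (hdeg i)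
  have hX_sq (i : Fin (m + 1)) : HasParity (X i ^ 2 : MvPolynomial (Fin (m + 1)) ℝ) 0 := by
    rw [sq]; exact X_mul_X_mem_evenSubalgebra i i
  have hq_par : ∀ i, HasParity (q i) (E i) := by
    refine Fin.cases ?_ fun i => ?_
    · rw [show (E 0 : ZMod 2) = 0 from (ZMod.natCast_self 2 :)]
      exact (IsWeightedHomogeneous.sum _ _ _ fun i _ => hX_sq i.succ).sub
        (isWeightedHomogeneous_one ..)
    · change HasParity (L i) (e i : ZMod 2)
      rw [ZMod.natCast_eq_one_iff_odd.mpr (he i)]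
      exact hpar i
  have hX_pow (i : Fin (m + 1)) :
      HasParity (X i ^ E i : MvPolynomial (Fin (m + 1)) ℝ) (E i) := by
    simpa using (isWeightedHomogeneous_X ℝ (1 : Fin (m + 1) → ZMod 2) i).pow (E i)
  have hodd : Odd (Nat.card {b : Fin (m + 1) →₀ ℕ | (∀ i, b i < E i) ∧ Even b.degree}) := by
    rw [card_even_lt_cons_two]
    exact Finset.prod_induction _ Odd (fun _ _ => Odd.mul) odd_one fun i _ => he i
  obtain ⟨v, hv, hzero⟩ := exists_eval_eq_zero_of_odd_card (e := E)
    (g := fun i => X i ^ E i + q i) (Fin.cases two_pos fun i => (he i).pos)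
    (fun i => monic_X_pow_add (hq i)) (fun i => degree_X_pow_add (hq i))
    (fun i => (hX_pow i).add (hq_par i)) hodd
    (Ideal.subset_span ⟨0, by simp [E, q, Fin.sum_univ_succ, add_sub_assoc]⟩)
  exact ⟨v, hv, fun i => by simpa [E, q] using hzero i.succ⟩

end System

section OddApproximation

variable {σ : Type*}

theorem HasParity.eval_neg {R : Type*} [CommRing R] {p : MvPolynomial σ R} {n : ZMod 2}
    (hp : HasParity p n) (v : σ → R) : eval (-v) p = (-1) ^ n.val * eval v p := by
  rw [eval_eq, eval_eq, Finset.mul_sum]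
  refine Finset.sum_congr rfl fun b hb => ?_
  have hn : ((b.degree : ℕ) : ZMod 2) = n := by
    rw [← weight_one_eq_natCast_degree]
    exact hp (MvPolynomial.mem_support_iff.mp hb)
  have hsign : (-1 : R) ^ n.val = (-1) ^ b.degree := by
    rw [← hn, ZMod.val_natCast, ← neg_one_pow_eq_pow_mod_two]
  have hmonomial : ∏ i ∈ b.support, (-v) i ^ b i =
      (-1) ^ b.degree * ∏ i ∈ b.support, v i ^ b i := by
    rw [degree_apply, ← Finset.prod_pow_eq_pow_sum, ← Finset.prod_mul_distrib]
    exact Finset.prod_congr rfl fun i _ => neg_pow (v i) (b i)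
  rw [hsign, hmonomial, mul_left_comm]

theorem eval_sub_eval_neg {R : Type*} [CommRing R] (p : MvPolynomial σ R) (v : σ → R) :
    eval v p - eval (-v) p =
      2 * eval v (weightedHomogeneousComponent (1 : σ → ZMod 2) 1 p) := by
  have hp : p = weightedHomogeneousComponent (1 : σ → ZMod 2) 0 p +
      weightedHomogeneousComponent (1 : σ → ZMod 2) 1 p := by
    ext b
    rw [coeff_add, coeff_weightedHomogeneousComponent, coeff_weightedHomogeneousComponent]
    obtain hb | hb : weight (1 : σ → ZMod 2) b = 0 ∨ weight (1 : σ → ZMod 2) b = 1 :=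
      (by decide : ∀ n : ZMod 2, n = 0 ∨ n = 1) _
    all_goals simp [hb]
  have heven := HasParity.eval_neg
    (weightedHomogeneousComponent_isWeightedHomogeneous 0 p) v
  have hodd := HasParity.eval_neg
    (weightedHomogeneousComponent_isWeightedHomogeneous 1 p) v
  conv_lhs => rw [hp, map_add, map_add, heven, hodd]
  rw [ZMod.val_zero, ZMod.val_one]
  ring

theorem exists_mvPolynomial_forall_abs_eval_sub_lt {K : Set (σ → ℝ)} (hK : IsCompact K)
    {f : (σ → ℝ) → ℝ} (hf : ContinuousOn f K) {ε : ℝ} (hε : 0 < ε) :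
    ∃ p : MvPolynomial σ ℝ, ∀ v ∈ K, |eval v p - f v| < ε := by
  have := isCompact_iff_compactSpace.mp hK
  let φ : MvPolynomial σ ℝ →ₐ[ℝ] C(K, ℝ) :=
    aeval fun i => ⟨fun v => v.1 i, (continuous_apply i).comp continuous_subtype_val⟩
  have hφ (p : MvPolynomial σ ℝ) (v : K) : φ p v = eval v.1 p := by
    induction p using MvPolynomial.induction_on with
    | C a => simp [φ]
    | add p q hp hq => rw [map_add, ContinuousMap.add_apply, hp, hq, map_add]
    | mul_X p i hp => rw [map_mul, ContinuousMap.mul_apply, hp, map_mul]; simp [φ]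
  have hsep : φ.range.SeparatesPoints := by
    intro u v huv
    obtain ⟨i, hi⟩ := Function.ne_iff.mp (Subtype.coe_ne_coe.mpr huv)
    exact ⟨φ (X i), ⟨φ (X i), ⟨X i, rfl⟩, rfl⟩, by simpa only [hφ, eval_X] using hi⟩
  obtain ⟨⟨_, p, rfl⟩, hp⟩ :=
    ContinuousMap.exists_mem_subalgebra_near_continuous_of_separatesPoints φ.range hsep
      (K.domRestrict f) hf.domRestrict ε hε
  exact ⟨p, fun v hv => by simpa [hφ] using hp ⟨v, hv⟩⟩

theorem exists_hasParity_one_forall_abs_eval_sub_lt {K : Set (σ → ℝ)} (hK : IsCompact K)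
    (hneg : ∀ v ∈ K, -v ∈ K) {f : (σ → ℝ) → ℝ} (hf : ContinuousOn f K)
    (hodd : ∀ v ∈ K, f (-v) = -f v) {ε : ℝ} (hε : 0 < ε) :
    ∃ p : MvPolynomial σ ℝ, HasParity p 1 ∧ ∀ v ∈ K, |eval v p - f v| < ε := by
  obtain ⟨p, hp⟩ := exists_mvPolynomial_forall_abs_eval_sub_lt hK hf hε
  refine ⟨_, weightedHomogeneousComponent_isWeightedHomogeneous 1 p, fun v hv => ?_⟩
  have hpos := abs_lt.mp (hp v hv)
  have hneg := abs_lt.mp (hp (-v) (hneg v hv))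
  rw [hodd v hv] at hneg
  have hodd_part := eval_sub_eval_neg p v
  rw [abs_lt]
  constructor <;> linarith

end OddApproximation

section BorsukUlam

theorem isCompact_setOf_sum_sq_eq_one {ι : Type*} [Fintype ι] :
    IsCompact {v : ι → ℝ | ∑ i, v i ^ 2 = 1} := by
  convert (isCompact_sphere (0 : EuclideanSpace ℝ ι) 1).image
    (PiLp.continuous_ofLp 2 fun _ : ι => ℝ) using 1
  ext v
  simpa [EuclideanSpace.sphere_zero_eq] using
    ⟨fun hv => ⟨.toLp 2 v, hv, rfl⟩, fun ⟨_, hw, hwv⟩ => hwv ▸ hw⟩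

theorem exists_eq_zero_of_forall_exists_norm_le {α E : Type*} [TopologicalSpace α]
    [NormedAddCommGroup E] {K : Set α} (hK : IsCompact K) {f : α → E} (hf : ContinuousOn f K)
    (h : ∀ ε > 0, ∃ v ∈ K, ‖f v‖ ≤ ε) : ∃ v ∈ K, f v = 0 := by
  suffices hzero : (0 : E) ∈ closure (f '' K) by
    rwa [(hK.image_of_continuousOn hf).isClosed.closure_eq] at hzero
  refine (mem_closure_iff_nhds_basis Metric.nhds_basis_closedBall).mpr fun ε hε => ?_
  obtain ⟨v, hv, hle⟩ := h ε hε
  exact ⟨f v, ⟨v, hv, rfl⟩, mem_closedBall_zero_iff.mpr hle⟩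

/- Scaling the odd approximations by `2 / ε` turns the leading powers, which are at most `1` on the
sphere, into a perturbation of size `ε / 2`. -/
theorem exists_sum_sq_eq_one_and_norm_le {m : ℕ} {f : (Fin (m + 1) → ℝ) → Fin m → ℝ}
    (hf : ContinuousOn f {v | ∑ i, v i ^ 2 = 1})
    (hodd : ∀ v : Fin (m + 1) → ℝ, ∑ i, v i ^ 2 = 1 → f (-v) = -f v) {ε : ℝ} (hε : 0 < ε) :
    ∃ v : Fin (m + 1) → ℝ, ∑ i, v i ^ 2 = 1 ∧ ‖f v‖ ≤ ε := by
  choose L hpar hL using fun i => exists_hasParity_one_forall_abs_eval_sub_lt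
    isCompact_setOf_sum_sq_eq_one (by simp) (continuousOn_pi.mp hf i)
    (fun v hv => congrFun (hodd v hv) i) (half_pos hε)
  obtain ⟨v, hv, hzero⟩ := exists_sum_sq_eq_one_and_pow_add_eval_eq_zero
    (e := fun i => 2 * (L i).totalDegree + 1) (L := fun i => (2 / ε) • L i)
    (fun i => odd_two_mul_add_one _)
    (fun i => (weightedHomogeneousSubmodule ℝ (1 : Fin (m + 1) → ZMod 2) 1).smul_mem _ (hpar i))
    (fun i => (totalDegree_smul_le _ _).trans_lt (by omega))
  refine ⟨v, hv, (pi_norm_le_iff_of_nonneg hε.le).mpr fun i => ?_⟩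
  have hcoord : |v i.succ| ≤ 1 := by
    rw [← sq_le_one_iff_abs_le_one, ← hv]
    exact Finset.single_le_sum (f := fun i => v i ^ 2) (fun _ _ => sq_nonneg _)
      (Finset.mem_univ i.succ)
  have heval : |eval v (L i)| ≤ ε / 2 := by
    have hLi : eval v (L i) = -(ε / 2) * v i.succ ^ (2 * (L i).totalDegree + 1) := by
      have := hzero i
      rw [smul_eval] at this
      field_simp at this ⊢
      linarith
    rw [hLi, abs_mul, abs_neg, abs_of_pos (half_pos hε), abs_pow]
    exact mul_le_of_le_one_right (half_pos hε).le (pow_le_one₀ (abs_nonneg _) hcoord)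
  calc
    |f v i| = |eval v (L i) - (eval v (L i) - f v i)| := by rw [sub_sub_cancel]
    _ ≤ |eval v (L i)| + |eval v (L i) - f v i| := abs_sub _ _
    _ ≤ ε / 2 + ε / 2 := add_le_add heval (hL i v hv).le
    _ = ε := add_halves ε

theorem exists_sum_sq_eq_one_and_eq_zero {m : ℕ} {f : (Fin (m + 1) → ℝ) → Fin m → ℝ}
    (hf : ContinuousOn f {v | ∑ i, v i ^ 2 = 1})
    (hodd : ∀ v : Fin (m + 1) → ℝ, ∑ i, v i ^ 2 = 1 → f (-v) = -f v) :
    ∃ v : Fin (m + 1) → ℝ, ∑ i, v i ^ 2 = 1 ∧ f v = 0 :=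
  exists_eq_zero_of_forall_exists_norm_le isCompact_setOf_sum_sq_eq_one hf fun _ hε =>
    exists_sum_sq_eq_one_and_norm_le hf hodd hε

theorem borsuk_ulam {E F : Type*} [NormedAddCommGroup E] [NormedSpace ℝ E]
    [NormedAddCommGroup F] [NormedSpace ℝ F] [FiniteDimensional ℝ F]
    (hrank : finrank ℝ F < finrank ℝ E) {f : E → F} (hf : ContinuousOn f (Metric.sphere 0 1))
    (hodd : ∀ v ∈ Metric.sphere 0 1, f (-v) = -f v) : ∃ v ∈ Metric.sphere (0 : E) 1, f v = 0 := by
  obtain ⟨m, hm⟩ : ∃ m, finrank ℝ E = m + 1 := Nat.exists_eq_add_one.mpr (by omega)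
  have : FiniteDimensional ℝ E := .of_finrank_pos (by omega)
  let g : (Fin (m + 1) → ℝ) ≃L[ℝ] E := .ofFinrankEq (by simp [hm])
  obtain ⟨h, hinj⟩ : ∃ h : F →ₗ[ℝ] (Fin m → ℝ), Function.Injective h :=
    finrank_le_iff_exists_linearMap.mp (by rw [finrank_fin_fun]; omega)
  have hg {v : Fin (m + 1) → ℝ} (hv : ∑ i, v i ^ 2 = 1) : ‖g v‖ ≠ 0 := by
    rw [norm_ne_zero_iff, map_ne_zero_iff g g.injective]
    rintro rfl
    simp at hv
  have hsphere {v : Fin (m + 1) → ℝ} (hv : ∑ i, v i ^ 2 = 1) :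
      ‖g v‖⁻¹ • g v ∈ Metric.sphere (0 : E) 1 := by
    rw [mem_sphere_zero_iff_norm, norm_smul, norm_inv, norm_norm, inv_mul_cancel₀ (hg hv)]
  obtain ⟨v, hv, hzero⟩ := exists_sum_sq_eq_one_and_eq_zero
    (f := fun v => h (f (‖g v‖⁻¹ • g v)))
    (h.continuous_of_finiteDimensional.comp_continuousOn <| hf.comp
      ((g.continuous.norm.continuousOn.inv₀ fun _ => hg).smul g.continuous.continuousOn)
      fun _ => hsphere)
    (fun v hv => by rw [map_neg, norm_neg, smul_neg, hodd _ (hsphere hv), map_neg])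
  exact ⟨_, hsphere hv, (map_eq_zero_iff h hinj).mp hzero⟩

end BorsukUlam

/-- **Borsuk–Ulam orthogonalization** (Lemma 3.3). In an `n`-dimensional real normed
vector space (`n ≥ 1`), given `x₁, …, x_{n−1}`, there is a unit vector `x_n` with
`[x_n, xᵢ] = ‖x_n + xᵢ‖² − ‖x_n − xᵢ‖² = 0` for all `i < n`. -/
theorem exists_unit_bracket_orthogonal_all {X : Type*} [NormedAddCommGroup X]
    [NormedSpace ℝ X] (n : ℕ) (hn : 1 ≤ n) (hdim : Module.finrank ℝ X = n)
    (x : Fin (n - 1) → X) :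
    ∃ xn : X, ‖xn‖ = 1 ∧ ∀ i, ‖xn + x i‖ ^ 2 - ‖xn - x i‖ ^ 2 = 0 := by
  let f (v : X) (i : Fin (n - 1)) : ℝ := ‖v + x i‖ ^ 2 - ‖v - x i‖ ^ 2
  have hf : Continuous f := by fun_prop
  have hodd (v : X) : f (-v) = -f v := by
    funext i
    have hadd : ‖-v + x i‖ = ‖v - x i‖ := by rw [neg_add_eq_sub, norm_sub_rev]
    have hsub : ‖-v - x i‖ = ‖v + x i‖ := by rw [← neg_add', norm_neg]
    simp only [f, Pi.neg_apply, hadd, hsub, neg_sub]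
  obtain ⟨xn, hxn, hzero⟩ := borsuk_ulam (by rw [finrank_fin_fun]; omega) hf.continuousOn
    fun v _ => hodd v
  exact ⟨xn, mem_sphere_zero_iff_norm.mp hxn, congrFun hzero⟩
end

section
/- Fix n ≥ 2. There exist constants C > 0 and ε₀ > 0 (depending only on n) such that for every ε ∈ [0, ε₀] and every n-dimensional real normed vector space X with von Neumann–Jordan constant at most ε + 1, there exists a linear isomorphism Λ from X onto the Euclidean space ℝⁿ with ‖Λ‖·‖Λ⁻¹‖ ≤ 1 + (18n² − 17n + 14)ε + Cε². In particular the Banach–Mazur distance satisfies d(X, ℝⁿ) ≤ 1 + (18n² − 17n + 14)ε + Cε². -/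
/-!
If `X` has von Neumann–Jordan constant `1 + ε`, then `q x = ‖x‖ ^ 2` satisfies the parallelogram law
up to `O(ε)`, so `q (x + y) - q (x - y)` is additive in each variable up to `O(ε)`. A bounded
approximately additive function on `[-1, 1]` is uniformly close to a linear one, which makes this
polarization approximately bilinear. Hence `q` is `O(n² ε)`-close, relative to any Euclidean norm
comparable to `‖·‖`, to the quadratic form with the same diagonal and polarization on an orthonormal
basis. The argument runs twice: a Euclidean norm with distortion `n`, coming from an Auerbach basis,
yields one with distortion bounded independently of `n`, and the latter yields the bound with a
coefficient of order `n²`.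
-/

open Set Module

section ApproxAdditive

variable {F : Type*} [SeminormedAddCommGroup F] [NormedSpace ℝ F] {f : ℝ → F} {θ : ℝ}

theorem norm_le_of_norm_add_sub_le_of_map_one_eq_zero {M : ℝ} (hf : f 1 = 0)
    (hadd : ∀ s t, |s| ≤ 1 → |t| ≤ 1 → |s + t| ≤ 1 → ‖f (s + t) - f s - f t‖ ≤ θ)
    (hM : ∀ t, |t| ≤ 1 → ‖f t‖ ≤ M) {t : ℝ} (ht : |t| ≤ 1) : ‖f t‖ ≤ (M + 3 * θ) / 2 := by
  have hθ : 0 ≤ θ := (norm_nonneg _).trans (hadd 0 0 (by simp) (by simp) (by simp))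
  have half : ∀ s, |s| ≤ 1 / 2 → ‖f s‖ ≤ (M + θ) / 2 := by
    intro s hs
    have hss : |s + s| ≤ 1 := by rw [← two_mul, abs_mul, abs_two]; linarith
    have hdouble : 2 * ‖f s‖ = ‖f (s + s) - (f (s + s) - f s - f s)‖ := by
      rw [sub_sub, sub_sub_cancel, ← two_smul ℝ, norm_smul, Real.norm_two]
    linarith [norm_sub_le (f (s + s)) (f (s + s) - f s - f s), hM _ hss,
      hadd s s (by linarith) (by linarith) hss]
  rcases le_total |t| (1 / 2) with hsmall | hlarge
  · linarith [half t hsmall]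
  · obtain ⟨ht₁, ht₂⟩ := abs_le.1 ht
    rcases le_total 0 t with hpos | hneg
    · rw [abs_of_nonneg hpos] at hlarge
      have hshift : ‖f (t - 1)‖ ≤ (M + θ) / 2 := half _ (abs_le.2 ⟨by linarith, by linarith⟩)
      have herr := hadd (t - 1) 1 (abs_le.2 ⟨by linarith, by linarith⟩) (by simp) (by simpa)
      rw [sub_add_cancel, hf, sub_zero] at herr
      linarith [norm_le_norm_add_norm_sub' (f t) (f (t - 1))]
    · rw [abs_of_nonpos hneg] at hlarge
      have hshift : ‖f (t + 1)‖ ≤ (M + θ) / 2 := half _ (abs_le.2 ⟨by linarith, by linarith⟩)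
      have herr := hadd t 1 ht (by simp) (abs_le.2 ⟨by linarith, by linarith⟩)
      rw [hf, sub_zero] at herr
      linarith [norm_le_norm_add_norm_sub (f (t + 1)) (f t)]

theorem norm_sub_smul_le_of_norm_add_sub_le (hbdd : Bornology.IsBounded (f '' Icc (-1) 1))
    (hadd : ∀ s t, |s| ≤ 1 → |t| ≤ 1 → |s + t| ≤ 1 → ‖f (s + t) - f s - f t‖ ≤ θ)
    {t : ℝ} (ht : |t| ≤ 1) : ‖f t - t • f 1‖ ≤ 3 * θ := by
  let g : ℝ → F := fun s ↦ f s - s • f 1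
  have hgadd : ∀ r s, |r| ≤ 1 → |s| ≤ 1 → |r + s| ≤ 1 → ‖g (r + s) - g r - g s‖ ≤ θ := by
    intro r s hr hs hrs
    have hg : g (r + s) - g r - g s = f (r + s) - f r - f s := by simp only [g]; module
    exact hg ▸ hadd r s hr hs hrs
  obtain ⟨B, hB⟩ := hbdd.exists_norm_le
  have hgbdd : BddAbove ((fun s ↦ ‖g s‖) '' Icc (-1) 1) := by
    refine ⟨B + ‖f 1‖, forall_mem_image.2 fun s hs ↦ ?_⟩
    calc ‖g s‖ ≤ ‖f s‖ + ‖s • f 1‖ := norm_sub_le _ _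
      _ ≤ B + ‖f 1‖ := by
        gcongr
        · exact hB _ (mem_image_of_mem f hs)
        · rw [norm_smul]
          exact mul_le_of_le_one_left (norm_nonneg _) (abs_le.2 hs)
  obtain ⟨M, hM⟩ := Real.exists_isLUB ((nonempty_Icc.2 (by norm_num)).image _) hgbdd
  have hgM : ∀ s, |s| ≤ 1 → ‖g s‖ ≤ M := fun s hs ↦ hM.1 (mem_image_of_mem _ (abs_le.1 hs))
  have hcontr : M ≤ (M + 3 * θ) / 2 := hM.2 <| forall_mem_image.2 fun s hs ↦
    norm_le_of_norm_add_sub_le_of_map_one_eq_zero (by simp [g]) hgadd hgM (abs_le.2 hs)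
  exact (hgM t ht).trans (by linarith)

end ApproxAdditive

/-- The polarization of `q`: four times the bilinear form attached to `q` when `q` is a quadratic
form. Unlike `QuadraticMap.polar`, it is odd in each variable for every even function `q`. -/
def polarization {M F : Type*} [AddCommGroup M] [AddCommGroup F] (q : M → F) (x y : M) : F :=
  q (x + y) - q (x - y)

section Polarization

variable {M F : Type*} [AddCommGroup M] [AddCommGroup F]

theorem polarization_comm {q : M → F} (hq : ∀ x, q (-x) = q x) (x y : M) :
    polarization q x y = polarization q y x := by
  rw [polarization, polarization, add_comm, ← hq (x - y), neg_sub]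

theorem polarization_zero_left {q : M → F} (hq : ∀ x, q (-x) = q x) (y : M) :
    polarization q 0 y = 0 := by
  rw [polarization, zero_add, zero_sub, hq, sub_self]

theorem polarization_sub (p q : M → F) (x y : M) :
    polarization (p - q) x y = polarization p x y - polarization q x y := by
  simp only [polarization, Pi.sub_apply]; abel

theorem polarization_smul_smul {R : Type*} [CommRing R] [Module R M] [Module R F] {q : M → F}
    (hq : ∀ (t : R) x, q (t • x) = t ^ 2 • q x) (t : R) (x y : M) :
    polarization q (t • x) (t • y) = t ^ 2 • polarization q x y := by
  rw [polarization, ← smul_add, ← smul_sub, hq, hq, polarization, smul_sub]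

theorem polarization_toQuadraticMap {R : Type*} [CommRing R] [Module R M] [Module R F]
    (B : LinearMap.BilinMap R M F) (x y : M) :
    polarization B.toQuadraticMap x y = (2 : R) • (B x y + B y x) := by
  simp only [polarization, LinearMap.BilinMap.toQuadraticMap_apply, map_add, map_sub,
    LinearMap.add_apply, LinearMap.sub_apply]
  module

theorem exists_quadraticForm_polarization_eq {K ι : Type*} [Field K] [NeZero (2 : K)] [Finite ι]
    [Module K M] (b : Basis ι K M) {q : M → K} (hq : ∀ (t : K) x, q (t • x) = t ^ 2 * q x) :
    ∃ Q : QuadraticForm K M, (∀ i, Q (b i) = q (b i)) ∧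
      ∀ i j, polarization Q (b i) (b j) = polarization q (b i) (b j) := by
  classical
  have := Fintype.ofFinite ι
  have htwo : (2 : K) ≠ 0 := two_ne_zero
  let A : Matrix ι ι K := Matrix.of fun i j ↦ polarization q (b i) (b j) / 2 ^ 2
  have hA : ∀ i j, Matrix.toBilin b A (b i) (b j) = polarization q (b i) (b j) / 2 ^ 2 :=
    fun i j ↦ by
      rw [← LinearMap.BilinForm.toMatrix_apply, LinearMap.BilinForm.toMatrix_toBilin]
      rfl
  have heven : ∀ x, q (-x) = q x := fun x ↦ by simpa using hq (-1) x
  refine ⟨(Matrix.toBilin b A).toQuadraticMap, fun i ↦ ?_, fun i j ↦ ?_⟩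
  · have hdiag : polarization q (b i) (b i) = 2 ^ 2 * q (b i) := by
      rw [polarization, ← two_smul K, hq, sub_self, ← zero_smul K (b i), hq]; ring
    rw [LinearMap.BilinMap.toQuadraticMap_apply, hA, hdiag]; field_simp
  · rw [polarization_toQuadraticMap, hA, hA, polarization_comm heven (b j), smul_eq_mul]
    field_simp
    ring

end Polarization

theorem continuous_quadraticForm {E : Type*} [NormedAddCommGroup E] [NormedSpace ℝ E]
    [FiniteDimensional ℝ E] (Q : QuadraticForm ℝ E) : Continuous Q := by
  let B := (QuadraticMap.associated (R := ℝ) Q).toContinuousBilinearMap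
  have hQ : ⇑Q = fun x ↦ B x x := funext fun x ↦ (QuadraticMap.associated_eq_self_apply ℝ Q x).symm
  rw [hQ]
  fun_prop

/-- `q` is a continuous function, homogeneous of degree two, satisfying the parallelogram law up to
an error `2 * δ * (‖x‖ ^ 2 + ‖y‖ ^ 2)`. For `q x = ‖x‖ ^ 2` this says that the space has von
Neumann–Jordan constant about `1 + δ`. Continuity is imposed because homogeneity and
the exact parallelogram law do not by themselves make `q` a quadratic form. -/
structure IsApproxQuadratic {E : Type*} [NormedAddCommGroup E] [NormedSpace ℝ E] (δ : ℝ)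
    (q : E → ℝ) : Prop where
  nonneg : 0 ≤ δ
  continuous : Continuous q
  map_smul : ∀ (t : ℝ) x, q (t • x) = t ^ 2 * q x
  parallelogram : ∀ x y,
    |q (x + y) + q (x - y) - 2 * (q x + q y)| ≤ 2 * δ * (‖x‖ ^ 2 + ‖y‖ ^ 2)

theorem norm_sq_sum_smul {E ι : Type*} [NormedAddCommGroup E] [InnerProductSpace ℝ E] {e : ι → E}
    (he : Orthonormal ℝ e) (x : ι → ℝ) (s : Finset ι) :
    ‖∑ i ∈ s, x i • e i‖ ^ 2 = ∑ i ∈ s, x i ^ 2 := by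
  rw [← real_inner_self_eq_norm_sq, he.inner_sum]
  simp only [conj_trivial, ← sq]

namespace IsApproxQuadratic

section NormedSpace

variable {E X : Type*} [NormedAddCommGroup E] [NormedSpace ℝ E] [NormedAddCommGroup X]
  [NormedSpace ℝ X] {δ : ℝ} {q : E → ℝ}

theorem map_neg (h : IsApproxQuadratic δ q) (x : E) : q (-x) = q x := by
  simpa using h.map_smul (-1) x

theorem map_zero (h : IsApproxQuadratic δ q) : q 0 = 0 := by
  simpa using h.map_smul 0 0

theorem comp (h : IsApproxQuadratic δ q) (A : X →L[ℝ] E) {c : ℝ} (hc : 0 ≤ c)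
    (hA : ∀ x, ‖A x‖ ^ 2 ≤ c * ‖x‖ ^ 2) : IsApproxQuadratic (c * δ) (q ∘ A) where
  nonneg := mul_nonneg hc h.nonneg
  continuous := h.continuous.comp A.continuous
  map_smul t x := by simp only [Function.comp_apply, _root_.map_smul, h.map_smul]
  parallelogram x y := by
    have hδ := h.nonneg
    calc |(q ∘ A) (x + y) + (q ∘ A) (x - y) - 2 * ((q ∘ A) x + (q ∘ A) y)|
        ≤ 2 * δ * (‖A x‖ ^ 2 + ‖A y‖ ^ 2) := by
          simpa only [Function.comp_apply, map_add, map_sub] using h.parallelogram (A x) (A y)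
      _ ≤ 2 * δ * (c * ‖x‖ ^ 2 + c * ‖y‖ ^ 2) := by gcongr <;> exact hA _
      _ = 2 * (c * δ) * (‖x‖ ^ 2 + ‖y‖ ^ 2) := by ring

theorem sub_quadraticForm [FiniteDimensional ℝ E] (h : IsApproxQuadratic δ q)
    (Q : QuadraticForm ℝ E) : IsApproxQuadratic δ (q - ⇑Q) where
  nonneg := h.nonneg
  continuous := h.continuous.sub (continuous_quadraticForm Q)
  map_smul t x := by
    simp only [Pi.sub_apply, h.map_smul, QuadraticMap.map_smul, smul_eq_mul]; ring
  parallelogram x y := by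
    have hQ : Q (x + y) + Q (x - y) = 2 * (Q x + Q y) := by
      rw [sub_eq_add_neg, QuadraticMap.map_add Q, QuadraticMap.map_add Q x (-y),
        QuadraticMap.map_neg, QuadraticMap.polar_neg_right]
      ring
    convert h.parallelogram x y using 2
    simp only [Pi.sub_apply]
    linarith

theorem of_vonNeumannJordan {ε : ℝ} (hε : 0 ≤ ε)
    (hX : ∀ a b : X, ¬(a = 0 ∧ b = 0) →
      1 / (ε + 1) ≤ (‖a + b‖ ^ 2 + ‖a - b‖ ^ 2) / (2 * (‖a‖ ^ 2 + ‖b‖ ^ 2)) ∧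
      (‖a + b‖ ^ 2 + ‖a - b‖ ^ 2) / (2 * (‖a‖ ^ 2 + ‖b‖ ^ 2)) ≤ ε + 1) :
    IsApproxQuadratic ε fun x : X ↦ ‖x‖ ^ 2 where
  nonneg := hε
  continuous := by fun_prop
  map_smul t x := by rw [norm_smul, mul_pow, Real.norm_eq_abs, sq_abs]
  parallelogram a b := by
    by_cases hab : a = 0 ∧ b = 0
    · simp [hab.1, hab.2]
    have hpos : 0 < 2 * (‖a‖ ^ 2 + ‖b‖ ^ 2) := by
      rcases not_and_or.1 hab with ha | hb <;> positivity
    obtain ⟨hlower, hupper⟩ := hX a b hab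
    have hinv : 1 - ε ≤ 1 / (ε + 1) := by
      rw [le_div_iff₀ (by linarith)]; linarith [sq_nonneg ε]
    replace hlower := (le_div_iff₀ hpos).1 (hinv.trans hlower)
    rw [div_le_iff₀ hpos] at hupper
    exact abs_le.2 ⟨by linarith, by linarith⟩

end NormedSpace

section InnerProductSpace

variable {E : Type*} [NormedAddCommGroup E] [InnerProductSpace ℝ E] {δ : ℝ} {q : E → ℝ}

-- Combine the four approximate parallelogram laws for `(x ± z, y)` and `(y ± z, x)`.
theorem abs_polarization_add_sub_le (h : IsApproxQuadratic δ q) (x y z : E) :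
    |polarization q (x + y) z - polarization q x z - polarization q y z| ≤
      4 * δ * (‖x‖ ^ 2 + ‖y‖ ^ 2 + ‖z‖ ^ 2) := by
  have hxadd := h.parallelogram (x + z) y
  have hxsub := h.parallelogram (x - z) y
  have hyadd := h.parallelogram (y + z) x
  have hysub := h.parallelogram (y - z) x
  rw [add_right_comm, ← h.map_neg (x + z - y)] at hxadd
  rw [sub_add_eq_add_sub] at hxsub
  rw [add_right_comm, add_comm y x, ← h.map_neg (y + z - x)] at hyadd
  rw [sub_add_eq_add_sub, add_comm y x] at hysub
  have hneg₁ : -(x + z - y) = y - z - x := by abel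
  have hneg₂ : -(y + z - x) = x - z - y := by abel
  rw [hneg₁] at hxadd
  rw [hneg₂] at hyadd
  have hx := congrArg (δ * ·) (parallelogram_law_with_norm ℝ x z)
  have hy := congrArg (δ * ·) (parallelogram_law_with_norm ℝ y z)
  simp only [polarization]
  rw [abs_le] at *
  constructor <;> linarith

theorem abs_polarization_smul_sub_le (h : IsApproxQuadratic δ q) {u v : E} (hu : ‖u‖ = 1)
    (hv : ‖v‖ = 1) {t : ℝ} (ht : |t| ≤ 1) :
    |polarization q (t • u) v - t * polarization q u v| ≤ 36 * δ := by
  have hq := h.continuous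
  have hbdd : Bornology.IsBounded ((fun s : ℝ ↦ polarization q (s • u) v) '' Icc (-1) 1) := by
    refine (isCompact_Icc.image ?_).isBounded
    simp only [polarization]
    fun_prop
  have hadd : ∀ r s : ℝ, |r| ≤ 1 → |s| ≤ 1 → |r + s| ≤ 1 →
      |polarization q ((r + s) • u) v - polarization q (r • u) v - polarization q (s • u) v| ≤
        12 * δ := by
    intro r s hr hs _
    have hr2 : ‖r • u‖ ^ 2 ≤ 1 := by simpa [norm_smul, hu] using hr
    have hs2 : ‖s • u‖ ^ 2 ≤ 1 := by simpa [norm_smul, hu] using hs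
    have hδ := h.nonneg
    rw [add_smul]
    calc _ ≤ 4 * δ * (‖r • u‖ ^ 2 + ‖s • u‖ ^ 2 + ‖v‖ ^ 2) :=
          h.abs_polarization_add_sub_le _ _ _
      _ ≤ 4 * δ * (1 + 1 + 1 ^ 2) := by gcongr; exact hv.le
      _ = 12 * δ := by ring
  have hlin := norm_sub_smul_le_of_norm_add_sub_le hbdd hadd ht
  rw [one_smul, smul_eq_mul, Real.norm_eq_abs] at hlin
  linarith

theorem abs_polarization_smul_smul_sub_le (h : IsApproxQuadratic δ q) {u v : E} (hu : ‖u‖ = 1)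
    (hv : ‖v‖ = 1) (a b : ℝ) :
    |polarization q (a • u) (b • v) - a * b * polarization q u v| ≤
      36 * δ * (a ^ 2 + b ^ 2) := by
  wlog hab : |a| ≤ |b| generalizing a b u v
  · have hswap := this hv hu b a (not_le.1 hab).le
    rwa [polarization_comm h.map_neg, polarization_comm h.map_neg v, mul_comm b a,
      add_comm (b ^ 2)] at hswap
  have hδ := h.nonneg
  rcases eq_or_ne b 0 with rfl | hb
  · obtain rfl : a = 0 := by simpa using hab
    simp [polarization]
  have hratio : |a / b| ≤ 1 := by rw [abs_div]; exact div_le_one_of_le₀ hab (abs_nonneg b)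
  have hscale : polarization q (a • u) (b • v) = b ^ 2 * polarization q ((a / b) • u) v := by
    rw [← smul_eq_mul, ← polarization_smul_smul h.map_smul, smul_smul, mul_div_cancel₀ a hb]
  calc _ = b ^ 2 * |polarization q ((a / b) • u) v - a / b * polarization q u v| := by
        rw [hscale, ← abs_of_nonneg (sq_nonneg b), ← abs_mul, abs_of_nonneg (sq_nonneg b)]
        congr 1
        field_simp
    _ ≤ b ^ 2 * (36 * δ) := by gcongr; exact h.abs_polarization_smul_sub_le hu hv hratio
    _ ≤ 36 * δ * (a ^ 2 + b ^ 2) := by nlinarith [mul_nonneg hδ (sq_nonneg a)]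

theorem abs_polarization_sum_smul_le {ι : Type*} {e : ι → E} (h : IsApproxQuadratic δ q)
    (he : Orthonormal ℝ e) (hpol : Pairwise fun i j ↦ polarization q (e i) (e j) = 0) (x : ι → ℝ)
    {s : Finset ι} {j : ι} (hj : j ∉ s) :
    |polarization q (∑ i ∈ s, x i • e i) (x j • e j)| ≤
      40 * s.card * δ * (∑ i ∈ s, x i ^ 2 + x j ^ 2) := by
  classical
  induction s using Finset.induction_on with
  | empty => simp [polarization_zero_left h.map_neg]
  | insert k s hk ih =>
    obtain ⟨hjk, hjs⟩ : j ≠ k ∧ j ∉ s := by simpa using hj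
    have hδ := h.nonneg
    rw [Finset.sum_insert hk, Finset.sum_insert hk, Finset.card_insert_of_notMem hk]
    have hadd := h.abs_polarization_add_sub_le (x k • e k) (∑ i ∈ s, x i • e i) (x j • e j)
    rw [norm_sq_sum_smul he, norm_smul, norm_smul, he.1, he.1] at hadd
    have hsmul := h.abs_polarization_smul_smul_sub_le (he.1 k) (he.1 j) (x k) (x j)
    rw [hpol hjk.symm, mul_zero, sub_zero] at hsmul
    simp only [mul_one, Real.norm_eq_abs, sq_abs] at hadd
    set y := ∑ i ∈ s, x i • e i
    set N := ∑ i ∈ s, x i ^ 2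
    have hN : 0 ≤ N := by positivity
    calc |polarization q (x k • e k + y) (x j • e j)|
        ≤ 4 * δ * (x k ^ 2 + N + x j ^ 2) + 36 * δ * (x k ^ 2 + x j ^ 2) +
            40 * s.card * δ * (N + x j ^ 2) := by
          have hih := ih hjs
          rw [abs_le] at *
          constructor <;> linarith
      _ ≤ 40 * δ * (x k ^ 2 + N + x j ^ 2) + 40 * s.card * δ * (x k ^ 2 + N + x j ^ 2) := by
          have hslack : 0 ≤ 36 * δ * N + 40 * s.card * δ * x k ^ 2 := by positivity
          linarith
      _ = 40 * ((s.card + 1 : ℕ) : ℝ) * δ * (x k ^ 2 + N + x j ^ 2) := by push_cast; ring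

theorem abs_sum_smul_le {ι : Type*} {e : ι → E} (h : IsApproxQuadratic δ q)
    (he : Orthonormal ℝ e) (hpol : Pairwise fun i j ↦ polarization q (e i) (e j) = 0)
    (hdiag : ∀ i, q (e i) = 0) (x : ι → ℝ) (s : Finset ι) :
    |q (∑ i ∈ s, x i • e i)| ≤ 10 * s.card ^ 2 * δ * ∑ i ∈ s, x i ^ 2 := by
  classical
  induction s using Finset.induction_on with
  | empty => simp [h.map_zero]
  | insert k s hk ih =>
    have hδ := h.nonneg
    rw [Finset.sum_insert hk, Finset.sum_insert hk, Finset.card_insert_of_notMem hk,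
      add_comm (x k • e k), add_comm (x k ^ 2)]
    have hcross := h.abs_polarization_sum_smul_le he hpol x hk
    have hpar := h.parallelogram (∑ i ∈ s, x i • e i) (x k • e k)
    rw [norm_sq_sum_smul he, norm_smul, he.1, h.map_smul, hdiag] at hpar
    simp only [mul_one, Real.norm_eq_abs, sq_abs, mul_zero, add_zero] at hpar
    rw [polarization] at hcross
    set y := ∑ i ∈ s, x i • e i
    set N := ∑ i ∈ s, x i ^ 2
    have hN : 0 ≤ N := by positivity
    calc |q (y + x k • e k)|
        ≤ 10 * s.card ^ 2 * δ * N + δ * (N + x k ^ 2) + 20 * s.card * δ * (N + x k ^ 2) := by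
          rw [abs_le] at *
          constructor <;> linarith
      _ ≤ 10 * s.card ^ 2 * δ * (N + x k ^ 2) + 10 * δ * (N + x k ^ 2) +
            20 * s.card * δ * (N + x k ^ 2) := by
          have hslack : 0 ≤ 10 * s.card ^ 2 * δ * x k ^ 2 + 9 * δ * (N + x k ^ 2) := by positivity
          linarith
      _ = 10 * ((s.card + 1 : ℕ) : ℝ) ^ 2 * δ * (N + x k ^ 2) := by push_cast; ring

theorem exists_quadraticForm_abs_sub_le [FiniteDimensional ℝ E] (h : IsApproxQuadratic δ q) :
    ∃ Q : QuadraticForm ℝ E, ∀ x, |q x - Q x| ≤ 10 * finrank ℝ E ^ 2 * δ * ‖x‖ ^ 2 := by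
  let b := stdOrthonormalBasis ℝ E
  obtain ⟨Q, hdiag, hpol⟩ := exists_quadraticForm_polarization_eq b.toBasis h.map_smul
  simp only [OrthonormalBasis.coe_toBasis] at hdiag hpol
  refine ⟨Q, fun x ↦ ?_⟩
  have hD := (h.sub_quadraticForm Q).abs_sum_smul_le b.orthonormal
    (fun i j _ ↦ by simp only [polarization_sub, hpol, sub_self])
    (fun i ↦ by rw [Pi.sub_apply, hdiag, sub_self]) (b.repr x) Finset.univ
  rwa [← norm_sq_sum_smul b.orthonormal, b.sum_repr, Finset.card_univ, Fintype.card_fin] at hD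

end InnerProductSpace

end IsApproxQuadratic

section Euclidean

variable {M : Type*} [AddCommGroup M] [Module ℝ M] [FiniteDimensional ℝ M]

theorem exists_linearEquiv_euclideanSpace_norm_sq_eq {Q : QuadraticForm ℝ M} (hQ : Q.PosDef) :
    ∃ L : M ≃ₗ[ℝ] EuclideanSpace ℝ (Fin (finrank ℝ M)), ∀ x, ‖L x‖ ^ 2 = Q x := by
  obtain ⟨w, hw, ⟨f⟩⟩ := QuadraticForm.equivalent_one_zero_neg_one_weighted_sum_squared Q
  have hw_one : ∀ i, w i = 1 := by
    intro i
    have hpos : 0 < Q (f.symm (Pi.single i 1)) := hQ _ (by simp)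
    have hwi : Q (f.symm (Pi.single i 1)) = w i := by
      rw [← f.map_app, f.apply_symm_apply]
      simp [QuadraticMap.weightedSumSquares_apply, Pi.single_apply]
    rcases hw i with h | h | h <;> linarith
  refine ⟨f.toLinearEquiv.trans (WithLp.linearEquiv 2 ℝ (Fin (finrank ℝ M) → ℝ)).symm, fun x ↦ ?_⟩
  rw [← f.map_app, QuadraticMap.weightedSumSquares_apply, EuclideanSpace.norm_sq_eq]
  simp [hw_one, sq]

end Euclidean

section Auerbach

theorem basis_det_update_self {R M ι : Type*} [CommRing R] [AddCommGroup M] [Module R M] [Fintype ι]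
    [DecidableEq ι] (b : Basis ι R M) (i : ι) (x : M) :
    b.det (Function.update b i x) = b.repr x i := by
  rw [Basis.det_apply, Basis.toMatrix_update, Basis.toMatrix_self, ← Matrix.cramer_apply,
    Matrix.cramer_one, Module.End.one_apply]

variable {𝕜 X ι : Type*} [RCLike 𝕜] [NormedAddCommGroup X] [NormedSpace 𝕜 X] [Fintype ι]
  [DecidableEq ι]

theorem norm_repr_le_of_norm_det_le_one {b : Basis ι 𝕜 X} (hb : ∀ i, ‖b i‖ ≤ 1)
    (hdet : ∀ v : ι → X, (∀ i, ‖v i‖ ≤ 1) → ‖b.det v‖ ≤ 1) (i : ι) (x : X) :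
    ‖b.repr x i‖ ≤ ‖x‖ := by
  have hball : ∀ y, ‖y‖ ≤ 1 → ‖b.coord i y‖ ≤ 1 := by
    intro y hy
    rw [Basis.coord_apply, ← basis_det_update_self]
    refine hdet _ fun j ↦ ?_
    rcases eq_or_ne j i with rfl | hj
    · rwa [Function.update_self]
    · rw [Function.update_of_ne hj]; exact hb j
  simpa using (b.coord i).bound_of_ball_bound' one_pos 1 (fun y hy ↦ hball y (by simpa using hy)) x

-- Auerbach's argument: maximize the determinant over families of vectors in the unit ball.
theorem exists_basis_norm_det_le_one (b₀ : Basis ι 𝕜 X) :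
    ∃ b : Basis ι 𝕜 X, (∀ i, ‖b i‖ ≤ 1) ∧
      ∀ v : ι → X, (∀ i, ‖v i‖ ≤ 1) → ‖b.det v‖ ≤ 1 := by
  have : FiniteDimensional 𝕜 X := b₀.finiteDimensional_of_finite
  have : ProperSpace X := FiniteDimensional.proper 𝕜 X
  have hcont : Continuous fun v : ι → X ↦ ‖b₀.det v‖ := by
    refine continuous_norm.comp (Continuous.matrix_det (continuous_matrix fun i j ↦ ?_))
    exact (b₀.coord i).continuous_of_finiteDimensional.comp (continuous_apply j)
  have hcompact : IsCompact (Set.univ.pi fun _ : ι ↦ Metric.closedBall (0 : X) 1) :=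
    isCompact_univ_pi fun _ ↦ isCompact_closedBall _ _
  obtain ⟨w, hw, hmax⟩ := hcompact.exists_isMaxOn ⟨0, by simp⟩ hcont.continuousOn
  simp only [mem_univ_pi, mem_closedBall_zero_iff, isMaxOn_iff] at hw hmax
  have hpos : 0 < ‖b₀.det w‖ := by
    refine lt_of_lt_of_le ?_ (hmax (fun i ↦ ((‖b₀ i‖⁻¹ : ℝ) : 𝕜) • b₀ i) fun i ↦ ?_)
    · rw [AlternatingMap.map_smul_univ, b₀.det_self, norm_pos_iff]
      simp [Finset.prod_ne_zero_iff, b₀.ne_zero]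
    · simp [norm_smul, b₀.ne_zero i]
  obtain ⟨hli, hsp⟩ := b₀.is_basis_iff_det.2 (isUnit_iff_ne_zero.2 (norm_pos_iff.1 hpos))
  let b := Basis.mk hli hsp.ge
  have hbw : ⇑b = w := Basis.coe_mk _ _
  refine ⟨b, fun i ↦ hbw ▸ hw i, fun v hv ↦ le_of_mul_le_mul_left ?_ hpos⟩
  have hfactor : b₀.det v = b₀.det w * b.det v := by
    simpa [hbw] using congrArg (· v) (b₀.det.eq_smul_basis_det b)
  rw [← norm_mul, ← hfactor, mul_one]
  exact hmax v hv

end Auerbach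

section Distortion

variable {X Y : Type*} [NormedAddCommGroup X] [NormedSpace ℝ X] [NormedAddCommGroup Y]
  [NormedSpace ℝ Y]

theorem exists_equiv_euclideanSpace_norm_sq_le [FiniteDimensional ℝ X] :
    ∃ L : X ≃L[ℝ] EuclideanSpace ℝ (Fin (finrank ℝ X)), ∀ x,
      ‖x‖ ^ 2 ≤ finrank ℝ X * ‖L x‖ ^ 2 ∧ ‖L x‖ ^ 2 ≤ finrank ℝ X * ‖x‖ ^ 2 := by
  obtain ⟨b, hb, hdet⟩ := exists_basis_norm_det_le_one (finBasis ℝ X)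
  let L := b.equivFun.trans (WithLp.linearEquiv 2 ℝ (Fin (finrank ℝ X) → ℝ)).symm
  have hL : ∀ x, ‖L x‖ ^ 2 = ∑ i, ‖b.repr x i‖ ^ 2 := fun x ↦ EuclideanSpace.norm_sq_eq _
  refine ⟨L.toContinuousLinearEquiv, fun x ↦ ?_⟩
  rw [LinearEquiv.coe_toContinuousLinearEquiv', hL]
  constructor
  · have hnorm : ‖x‖ ≤ ∑ i, ‖b.repr x i‖ := by
      calc ‖x‖ = ‖∑ i, b.repr x i • b i‖ := by rw [b.sum_repr]
        _ ≤ ∑ i, ‖b.repr x i‖ := norm_sum_le_of_le _ fun i _ ↦ by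
          rw [norm_smul]; exact mul_le_of_le_one_right (norm_nonneg _) (hb i)
    calc ‖x‖ ^ 2 ≤ (∑ i, ‖b.repr x i‖) ^ 2 := by gcongr
      _ ≤ finrank ℝ X * ∑ i, ‖b.repr x i‖ ^ 2 := by
        simpa using sq_sum_le_card_mul_sum_sq (s := Finset.univ) (f := fun i ↦ ‖b.repr x i‖)
  · calc ∑ i, ‖b.repr x i‖ ^ 2 ≤ ∑ _i : Fin (finrank ℝ X), ‖x‖ ^ 2 := by
          gcongr with i
          exact norm_repr_le_of_norm_det_le_one hb hdet i x
      _ = finrank ℝ X * ‖x‖ ^ 2 := by simp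

theorem opNorm_le_sqrt {𝕜 V W : Type*} [NontriviallyNormedField 𝕜] [SeminormedAddCommGroup V]
    [NormedSpace 𝕜 V] [SeminormedAddCommGroup W] [NormedSpace 𝕜 W] {A : V →L[𝕜] W} {c : ℝ}
    (hA : ∀ x, ‖A x‖ ^ 2 ≤ c * ‖x‖ ^ 2) : ‖A‖ ≤ √c :=
  A.opNorm_le_bound (Real.sqrt_nonneg c) fun x ↦ by
    rw [← Real.sqrt_sq (norm_nonneg x), ← Real.sqrt_mul' _ (sq_nonneg _)]
    exact Real.le_sqrt_of_sq_le (hA x)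

theorem opNorm_mul_opNorm_symm_le {L : X ≃L[ℝ] Y} {η : ℝ} (hη : η < 1)
    (hL : ∀ x, |‖x‖ ^ 2 - ‖L x‖ ^ 2| ≤ η * ‖x‖ ^ 2) :
    ‖(L : X →L[ℝ] Y)‖ * ‖(L.symm : Y →L[ℝ] X)‖ ≤ (1 - η)⁻¹ := by
  have hη' : 0 < 1 - η := sub_pos.2 hη
  have hone : 1 + η ≤ (1 - η)⁻¹ := by
    rw [← one_div, le_div_iff₀ hη']; linarith [sq_nonneg η]
  have hnorm : ‖(L : X →L[ℝ] Y)‖ ≤ √(1 - η)⁻¹ := opNorm_le_sqrt fun x ↦ by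
    calc ‖L x‖ ^ 2 ≤ (1 + η) * ‖x‖ ^ 2 := by linarith [(abs_le.1 (hL x)).1]
      _ ≤ (1 - η)⁻¹ * ‖x‖ ^ 2 := by gcongr
  have hsymm : ‖(L.symm : Y →L[ℝ] X)‖ ≤ √(1 - η)⁻¹ := opNorm_le_sqrt fun y ↦ by
    have hy := (abs_le.1 (hL (L.symm y))).2
    rw [L.apply_symm_apply] at hy
    rw [inv_mul_eq_div, le_div_iff₀ hη', ContinuousLinearEquiv.coe_coe]
    linarith
  calc _ ≤ √(1 - η)⁻¹ * √(1 - η)⁻¹ := by gcongr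
    _ = (1 - η)⁻¹ := Real.mul_self_sqrt (by positivity)

end Distortion

section Stability

variable {X E : Type*} [NormedAddCommGroup X] [NormedSpace ℝ X] [FiniteDimensional ℝ X]
  [NormedAddCommGroup E] [InnerProductSpace ℝ E] {ε : ℝ}

theorem exists_equiv_euclideanSpace_abs_norm_sq_sub_le
    (hX : IsApproxQuadratic ε fun x : X ↦ ‖x‖ ^ 2) (L : X ≃L[ℝ] E) {c c' : ℝ} (hc : 0 ≤ c)
    (hL : ∀ x, ‖x‖ ^ 2 ≤ c * ‖L x‖ ^ 2 ∧ ‖L x‖ ^ 2 ≤ c' * ‖x‖ ^ 2)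
    (hsmall : 10 * finrank ℝ X ^ 2 * (c * c') * ε < 1) :
    ∃ L' : X ≃L[ℝ] EuclideanSpace ℝ (Fin (finrank ℝ X)), ∀ x,
      |‖x‖ ^ 2 - ‖L' x‖ ^ 2| ≤ 10 * finrank ℝ X ^ 2 * (c * c') * ε * ‖x‖ ^ 2 := by
  have : FiniteDimensional ℝ E := L.toLinearEquiv.finiteDimensional
  have hε := hX.nonneg
  obtain ⟨Q, hQ⟩ := (hX.comp (L.symm : E →L[ℝ] X) hc fun y ↦ by
    simpa using (hL (L.symm y)).1).exists_quadraticForm_abs_sub_le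
  have hQL : ∀ x, |‖x‖ ^ 2 - Q (L x)| ≤ 10 * finrank ℝ X ^ 2 * (c * c') * ε * ‖x‖ ^ 2 := by
    intro x
    calc |‖x‖ ^ 2 - Q (L x)| ≤ 10 * finrank ℝ X ^ 2 * (c * ε) * ‖L x‖ ^ 2 := by
          simpa [L.toLinearEquiv.finrank_eq] using hQ (L x)
      _ ≤ 10 * finrank ℝ X ^ 2 * (c * ε) * (c' * ‖x‖ ^ 2) := by gcongr; exact (hL x).2
      _ = _ := by ring
  have hpos : (Q.comp (L : X →ₗ[ℝ] E)).PosDef := by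
    intro x hx
    have hnorm : 0 < ‖x‖ ^ 2 := by positivity
    have hdom := mul_lt_of_lt_one_left hnorm hsmall
    have hle := (abs_le.1 (hQL x)).2
    change 0 < Q (L x)
    linarith
  obtain ⟨L', hL'⟩ := exists_linearEquiv_euclideanSpace_norm_sq_eq hpos
  refine ⟨L'.toContinuousLinearEquiv, fun x ↦ ?_⟩
  rw [LinearEquiv.coe_toContinuousLinearEquiv', hL']
  exact hQL x

theorem approx_jordan_von_neumann_general (hε : 0 ≤ ε) (hsmall : 210 * finrank ℝ X ^ 4 * ε ≤ 1)
    (hvNJ : ∀ a b : X, ¬(a = 0 ∧ b = 0) →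
      1 / (ε + 1) ≤ (‖a + b‖ ^ 2 + ‖a - b‖ ^ 2) / (2 * (‖a‖ ^ 2 + ‖b‖ ^ 2)) ∧
      (‖a + b‖ ^ 2 + ‖a - b‖ ^ 2) / (2 * (‖a‖ ^ 2 + ‖b‖ ^ 2)) ≤ ε + 1) :
    ∃ Λ : X ≃L[ℝ] EuclideanSpace ℝ (Fin (finrank ℝ X)),
      ‖(Λ : X →L[ℝ] EuclideanSpace ℝ (Fin (finrank ℝ X)))‖ *
        ‖(Λ.symm : EuclideanSpace ℝ (Fin (finrank ℝ X)) →L[ℝ] X)‖ ≤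
        1 + 12 * finrank ℝ X ^ 2 * ε := by
  have hX := IsApproxQuadratic.of_vonNeumannJordan hε hvNJ
  set n := finrank ℝ X
  obtain ⟨L₀, hL₀⟩ := exists_equiv_euclideanSpace_norm_sq_le (X := X)
  have hcoarse : 10 * (n : ℝ) ^ 2 * (n * n) * ε ≤ 1 / 21 := by linarith
  obtain ⟨L₁, hL₁⟩ := exists_equiv_euclideanSpace_abs_norm_sq_sub_le hX L₀ n.cast_nonneg hL₀
    (by linarith)
  have hL₁' : ∀ x, |‖x‖ ^ 2 - ‖L₁ x‖ ^ 2| ≤ 1 / 21 * ‖x‖ ^ 2 := fun x ↦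
    (hL₁ x).trans (by gcongr)
  have hn : (n : ℝ) ^ 2 ≤ n ^ 4 := by
    exact_mod_cast (Nat.le_mul_self (n ^ 2)).trans_eq (by ring)
  have hy : 210 * ((n : ℝ) ^ 2 * ε) ≤ 1 := by nlinarith
  have hy₀ : 0 ≤ (n : ℝ) ^ 2 * ε := by positivity
  obtain ⟨Λ, hΛ⟩ := exists_equiv_euclideanSpace_abs_norm_sq_sub_le hX L₁
    (c := 21 / 20) (c' := 22 / 21) (by norm_num)
    (fun x ↦ by
      obtain ⟨hlower, hupper⟩ := abs_le.1 (hL₁' x)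
      constructor <;> linarith)
    (by linarith)
  refine ⟨Λ, (opNorm_mul_opNorm_symm_le (by linarith) hΛ).trans ?_⟩
  rw [inv_le_iff_one_le_mul₀ (by linarith)]
  nlinarith

end Stability

/-- **Main theorem** (Theorem 3.4). For each `n ≥ 2` there are constants `C > 0` and
`ε₀ > 0` such that any `n`-dimensional real normed vector space with von Neumann–Jordan
constant at most `ε + 1` (for `ε ∈ [0, ε₀]`) admits a linear isomorphism `Λ` onto
Euclidean `ℝⁿ` with `‖Λ‖·‖Λ⁻¹‖ ≤ 1 + (18n² − 17n + 14)ε + Cε²`; in particular the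
Banach–Mazur distance `d(X, ℝⁿ)` is at most this quantity. -/
theorem approx_jordan_von_neumann (n : ℕ) (hn : 2 ≤ n) :
    ∃ C : ℝ, 0 < C ∧ ∃ ε₀ : ℝ, 0 < ε₀ ∧
      ∀ (ε : ℝ), 0 ≤ ε → ε ≤ ε₀ →
      ∀ (X : Type) (_ : NormedAddCommGroup X) (_ : NormedSpace ℝ X),
        Module.finrank ℝ X = n →
        (∀ a b : X, ¬(a = 0 ∧ b = 0) →
          1 / (ε + 1) ≤ (‖a + b‖ ^ 2 + ‖a - b‖ ^ 2) / (2 * (‖a‖ ^ 2 + ‖b‖ ^ 2)) ∧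
          (‖a + b‖ ^ 2 + ‖a - b‖ ^ 2) / (2 * (‖a‖ ^ 2 + ‖b‖ ^ 2)) ≤ ε + 1) →
        ∃ Λ : X ≃L[ℝ] EuclideanSpace ℝ (Fin n),
          ‖(Λ : X →L[ℝ] EuclideanSpace ℝ (Fin n))‖ *
            ‖(Λ.symm : EuclideanSpace ℝ (Fin n) →L[ℝ] X)‖ ≤
            1 + (18 * (n : ℝ) ^ 2 - 17 * n + 14) * ε + C * ε ^ 2 := by
  have hn₀ : (0 : ℝ) < n := by exact_mod_cast (by omega : 0 < n)
  refine ⟨1, one_pos, 1 / (210 * n ^ 4), by positivity, ?_⟩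
  rintro ε hε hε₀ X _ _ rfl hvNJ
  have : FiniteDimensional ℝ X := FiniteDimensional.of_finrank_pos (by omega)
  rw [le_div_iff₀ (by positivity)] at hε₀
  obtain ⟨Λ, hΛ⟩ := approx_jordan_von_neumann_general hε (by linarith) hvNJ
  refine ⟨Λ, hΛ.trans ?_⟩
  set n := finrank ℝ X
  have hcoeff : 12 * (n : ℝ) ^ 2 ≤ 18 * (n : ℝ) ^ 2 - 17 * n + 14 := by
    nlinarith [sq_nonneg (12 * (n : ℝ) - 17)]
  nlinarith
end
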